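/- arXiv:1808.01605 — 3 statements merged into one kernel-verified Lean document; each statement's English description precedes it below -/
import Mathlib

section
/- For every real number x ≥ 1 there exists a positive number k(x) such that every finite simple graph G with χ_f(G) ≥ k(x) contains a triangle-free subgraph H with χ_f(H) ≥ x. -/
open scoped Classical

/-- The fractional chromatic number of a finite simple graph `G`: the infimum of
`∑_I y I` over nonnegative weightings `y` of the independent sets of `G` such that
every vertex is covered with total weight at least `1`. -/
noncomputable def fracChrom {V : Type} [Fintype V] (G : SimpleGraph V) : ℝ :=
  sInf { c : ℝ |
    ∃ y : Finset V → ℝ,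
      (∀ I, 0 ≤ y I) ∧
      (∀ I : Finset V, y I ≠ 0 → ∀ u ∈ I, ∀ v ∈ I, ¬ G.Adj u v) ∧
      (∀ v : V, 1 ≤ ∑ I ∈ Finset.univ.filter (fun I : Finset V => v ∈ I), y I) ∧
      c = ∑ I : Finset V, y I }

/-!
Fix a triangle-free graph `Γ` in which any two sets of vertices with no edge between them include
a tiny one: join the points of a high-dimensional cube at Hamming distance more than `2 * d / 3`.
Label the vertices of `G` by vertices of `Γ` uniformly at random, and keep the edges of `G` whose
ends have `Γ`-adjacent labels. The resulting subgraph has a homomorphism to `Γ`, so it is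
triangle-free.

Let `w` be an optimal dual solution for `fracChrom G`, normalised to total weight `1`. An
independent set `S` of the subgraph contains a set `T` that spans no edge of `G` between equally
labelled vertices and is such that every vertex of `S \ T` has a heavier `G`-neighbour in `T` with
the same label. Then `T` is the union of its label classes, which are independent in `G`, so it is
light. For `v ∈ S \ T`, the heavier `G`-neighbours of `v` in `T` have a set `L` of labels that
contains the label of `v` but nothing `Γ`-adjacent to it. This traps the label of `v` in a tiny
set: `L` itself or, if `L` is not tiny, the vertices of `Γ` adjacent to none of `L`. With positive
probability, for every superlevel set of `w` and every choice of `T` in it, only a small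
proportion of that superlevel set is trapped. Summing over the superlevel sets shows that `S \ T`
is light too.
-/

open Finset

section Minimax

variable {m n : Type*} [Fintype m] [Fintype n]

theorem exists_mem_stdSimplex_mulVec_le_vecMul [Nonempty m] [Nonempty n] (A : Matrix m n ℝ) :
    ∃ y ∈ stdSimplex ℝ m, ∃ x ∈ stdSimplex ℝ n, ∀ i j, (A.mulVec x) i ≤ (A.vecMul y) j := by
  obtain ⟨x, hx, y, hy, hsaddle⟩ := Sion.exists_isSaddlePointOn
    (f := fun (x : n → ℝ) (y : m → ℝ) => y ⬝ᵥ A.mulVec x)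
    (X := stdSimplex ℝ n) (Y := stdSimplex ℝ m)
    ⟨_, single_mem_stdSimplex ℝ (Classical.arbitrary n)⟩
    (convex_stdSimplex ℝ n) (isCompact_stdSimplex ℝ n)
    (fun y _ => Continuous.lowerSemicontinuous (by fun_prop) |>.lowerSemicontinuousOn _)
    (fun y _ => (LinearMap.convexOn (dotProductBilin ℝ ℝ y ∘ₗ A.mulVecLin)
      (convex_stdSimplex ℝ n)).quasiconvexOn)
    (convex_stdSimplex ℝ m)
    ⟨_, single_mem_stdSimplex ℝ (Classical.arbitrary m)⟩ (isCompact_stdSimplex ℝ m)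
    (fun x _ => Continuous.upperSemicontinuous (by fun_prop) |>.upperSemicontinuousOn _)
    (fun x _ => (LinearMap.concaveOn ((dotProductBilin ℝ ℝ).flip (A.mulVec x))
      (convex_stdSimplex ℝ m)).quasiconcaveOn)
  refine ⟨y, hy, x, hx, fun i j => ?_⟩
  calc (A.mulVec x) i = Pi.single i 1 ⬝ᵥ A.mulVec x := by simp
    _ ≤ y ⬝ᵥ A.mulVec (Pi.single j 1) :=
        hsaddle _ (single_mem_stdSimplex ℝ j) _ (single_mem_stdSimplex ℝ i)
    _ = (A.vecMul y) j := by rw [Matrix.mulVec_single_one]; rfl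

end Minimax

section FracColoring

variable {V W : Type} [Fintype V] [Fintype W] {G : SimpleGraph V} {H : SimpleGraph W}

/-- A fractional colouring of `G`, encoded as a weighting of all finite sets of vertices which is
supported on the independent sets and covers every vertex with total weight at least `1`. -/
structure IsFracColoring (G : SimpleGraph V) (y : Finset V → ℝ) : Prop where
  nonneg : ∀ I, 0 ≤ y I
  isIndepSet : ∀ I, y I ≠ 0 → G.IsIndepSet I
  one_le_cover : ∀ v, 1 ≤ ∑ I with v ∈ I, y I

theorem fracChrom_eq_sInf (G : SimpleGraph V) :
    fracChrom G = sInf {c | ∃ y, IsFracColoring G y ∧ c = ∑ I, y I} := by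
  unfold fracChrom
  congr! 3 with c
  refine exists_congr fun y => ⟨?_, ?_⟩
  · rintro ⟨hnonneg, hindep, hcover, rfl⟩
    exact ⟨⟨hnonneg, fun I hI u hu v hv _ => hindep I hI u hu v hv, hcover⟩, rfl⟩
  · rintro ⟨hy, rfl⟩
    refine ⟨hy.nonneg, fun I hI u hu v hv huv => ?_, hy.one_le_cover, rfl⟩
    exact hy.isIndepSet I hI hu hv huv.ne huv

theorem isFracColoring_singletons (G : SimpleGraph V) :
    IsFracColoring G fun I => if #I = 1 then 1 else 0 where
  nonneg I := by split_ifs <;> norm_num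
  isIndepSet I hI := by
    obtain ⟨v, rfl⟩ := card_eq_one.mp (of_not_not fun h => hI (if_neg h))
    simp [SimpleGraph.isIndepSet_iff]
  one_le_cover v :=
    (le_of_eq (by simp)).trans <| single_le_sum
      (f := fun I : Finset V => if #I = 1 then (1 : ℝ) else 0) (a := {v})
      (fun I _ => by positivity) (by simp)

theorem IsFracColoring.fracChrom_le_sum {y : Finset V → ℝ} (hy : IsFracColoring G y) :
    fracChrom G ≤ ∑ I, y I := by
  rw [fracChrom_eq_sInf]
  refine csInf_le ⟨0, ?_⟩ ⟨y, hy, rfl⟩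
  rintro _ ⟨z, hz, rfl⟩
  exact sum_nonneg fun I _ => hz.nonneg I

theorem le_fracChrom {x : ℝ} (h : ∀ y, IsFracColoring G y → x ≤ ∑ I, y I) : x ≤ fracChrom G := by
  rw [fracChrom_eq_sInf]
  refine le_csInf ⟨_, _, isFracColoring_singletons G, rfl⟩ ?_
  rintro _ ⟨y, hy, rfl⟩
  exact h y hy

theorem fracChrom_nonneg (G : SimpleGraph V) : 0 ≤ fracChrom G :=
  le_fracChrom fun _ hy => sum_nonneg fun I _ => hy.nonneg I

theorem fracChrom_of_isEmpty [IsEmpty V] (G : SimpleGraph V) : fracChrom G = 0 := by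
  have hzero : IsFracColoring G 0 := ⟨fun _ => le_rfl, fun _ h => absurd rfl h, isEmptyElim⟩
  exact (hzero.fracChrom_le_sum.trans_eq (by simp)).antisymm (fracChrom_nonneg G)

theorem fracChrom_le_of_hom (f : G →g H) : fracChrom G ≤ fracChrom H := by
  refine le_fracChrom fun y hy => ?_
  let pull (J : Finset W) : Finset V := {v | f v ∈ J}
  have hpull : IsFracColoring G fun I => ∑ J with pull J = I, y J := by
    refine ⟨fun I => sum_nonneg fun J _ => hy.nonneg J, fun I hI => ?_, fun v => ?_⟩
    · obtain ⟨J, hJ, hyJ⟩ := exists_ne_zero_of_sum_ne_zero hI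
      obtain rfl := (mem_filter.mp hJ).2
      intro u hu v hv _ huv
      exact hy.isIndepSet J hyJ (mem_filter.mp hu).2 (mem_filter.mp hv).2 (f.map_adj huv).ne
        (f.map_adj huv)
    · rw [sum_fiberwise_eq_sum_filter]
      simpa [pull] using hy.one_le_cover (f v)
  simpa [sum_fiberwise] using hpull.fracChrom_le_sum

theorem le_fracChrom_of_forall_isIndepSet {x : ℝ} {w : V → ℝ} (hw : w ∈ stdSimplex ℝ V)
    (hx : ∀ S : Finset V, G.IsIndepSet S → x * ∑ v ∈ S, w v ≤ 1) : x ≤ fracChrom G := by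
  obtain hx0 | hx0 := le_or_gt x 0
  · exact hx0.trans (fracChrom_nonneg G)
  refine le_fracChrom fun y hy => ?_
  calc x = x * ∑ v, w v * 1 := by simp [hw.2]
    _ ≤ x * ∑ v, w v * ∑ I with v ∈ I, y I := by
        gcongr with v
        · exact hw.1 v
        · exact hy.one_le_cover v
    _ = ∑ I, y I * (x * ∑ v ∈ I, w v) := by
        simp_rw [mul_sum]
        rw [sum_comm' (t' := univ) (s' := fun I => I) (by simp)]
        exact sum_congr rfl fun I _ => sum_congr rfl fun v _ => by ring
    _ ≤ ∑ I, y I := by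
        refine sum_le_sum fun I _ => ?_
        obtain hI | hI := eq_or_ne (y I) 0
        · simp [hI]
        · exact mul_le_of_le_one_right (hy.nonneg I) (hx I (hy.isIndepSet I hI))

theorem exists_stdSimplex_forall_isIndepSet_fracChrom_mul_le [Nonempty V] (G : SimpleGraph V) :
    ∃ w ∈ stdSimplex ℝ V,
      ∀ I : Finset V, G.IsIndepSet I → fracChrom G * ∑ v ∈ I, w v ≤ 1 := by
  obtain ⟨p, hp, w, hw, hpw⟩ := exists_mem_stdSimplex_mulVec_le_vecMul
    (Matrix.of fun (I : Finset V) (v : V) => if v ∈ I ∧ G.IsIndepSet I then (1 : ℝ) else 0)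
  refine ⟨w, hw, fun I hI => ?_⟩
  have hcover (v : V) : ∑ u ∈ I, w u ≤
      ∑ J : Finset V with v ∈ J, if G.IsIndepSet J then p J else 0 := by
    simpa [Matrix.mulVec, Matrix.vecMul, dotProduct, hI, ite_and, ← sum_filter] using hpw I v
  obtain hzero | hpos := (sum_nonneg fun u (_ : u ∈ I) => hw.1 u).eq_or_lt
  · simp [← hzero]
  rw [← le_div_iff₀ hpos]
  have hcol : IsFracColoring G fun J => (if G.IsIndepSet J then p J else 0) / ∑ u ∈ I, w u := by
    refine ⟨fun J => ?_, fun J hJ => ?_, fun v => ?_⟩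
    · have := hp.1 J
      positivity
    · by_contra h
      simp [h] at hJ
    · rw [← sum_div, one_le_div hpos]
      exact hcover v
  refine hcol.fracChrom_le_sum.trans ?_
  rw [← sum_div, ← hp.2]
  gcongr with J
  split_ifs
  exacts [le_rfl, hp.1 J]

end FracColoring

section CubeGraph

variable {d : ℕ}

theorem hammingDist_cons {α : Type*} [DecidableEq α] (a b : α) (x y : Fin d → α) :
    hammingDist (Fin.cons a x : Fin (d + 1) → α) (Fin.cons b y) =
      (if a ≠ b then 1 else 0) + hammingDist x y := by
  rw [hammingDist, card_filter, Fin.sum_univ_succ]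
  simp [hammingDist, card_filter]

theorem add_mul_add_le {a₀ a₁ b₀ b₁ M : ℝ} (ha₀ : 0 ≤ a₀) (ha₁ : 0 ≤ a₁) (hb₀ : 0 ≤ b₀)
    (h₀₀ : a₀ * b₀ ≤ M) (h₁₁ : a₁ * b₁ ≤ M) (h₀₁ : 2 * (a₀ * b₁) ≤ M)
    (h₁₀ : 2 * (a₁ * b₀) ≤ M) : (a₀ + a₁) * (b₀ + b₁) ≤ 9 / 4 * M := by
  have hM : 0 ≤ M := (mul_nonneg ha₀ hb₀).trans h₀₀
  have hdiag : a₀ * b₀ + a₁ * b₁ ≤ 5 / 4 * M := by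
    -- The diagonal and the off-diagonal terms have the same product.
    have hprod : a₀ * b₀ * (a₁ * b₁) ≤ M ^ 2 / 4 := by
      have := mul_le_mul h₀₁ h₁₀ (by positivity) hM
      linarith
    obtain rfl | hM := hM.eq_or_lt
    · linarith
    · refine le_of_mul_le_mul_left ?_ hM
      linarith [mul_nonneg (sub_nonneg.2 h₀₀) (sub_nonneg.2 h₁₁)]
  linarith

theorem sum_mul_sum_le_of_mul_two_pow_hammingDist_le (f g : (Fin d → Bool) → ℝ) (C : ℝ)
    (hf : ∀ x, 0 ≤ f x) (hg : ∀ x, 0 ≤ g x)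
    (h : ∀ x y, f x * g y * 2 ^ hammingDist x y ≤ C) :
    (∑ x, f x) * ∑ y, g y ≤ C * (9 / 4) ^ d := by
  induction d generalizing C with
  | zero =>
    rw [Fintype.sum_subsingleton _ ![], Fintype.sum_subsingleton _ ![]]
    simpa using h ![] ![]
  | succ d ih =>
    have hsum (φ : (Fin (d + 1) → Bool) → ℝ) : ∑ x, φ x =
        ∑ x, φ (Fin.cons false x) + ∑ x, φ (Fin.cons true x) := by
      rw [← (Fin.consEquiv fun _ => Bool).sum_comp, Fintype.sum_prod_type]
      simp [Fin.consEquiv, add_comm]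
    have hcons (a b : Bool) (C' : ℝ) (hC' : (if a ≠ b then 2 else 1) * C' = C) :
        (∑ x, f (Fin.cons a x)) * ∑ y, g (Fin.cons b y) ≤ C' * (9 / 4) ^ d := by
      refine ih _ _ C' (fun x => hf _) (fun y => hg _) fun x y => ?_
      have := h (Fin.cons a x) (Fin.cons b y)
      rw [hammingDist_cons, pow_add] at this
      split_ifs at hC' this <;> linarith
    have hsum_nonneg (φ : (Fin (d + 1) → Bool) → ℝ) (hφ : ∀ x, 0 ≤ φ x) (a : Bool) :
        0 ≤ ∑ x, φ (Fin.cons a x) := sum_nonneg fun x _ => hφ _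
    rw [hsum, hsum, pow_succ', mul_left_comm]
    exact add_mul_add_le (hsum_nonneg f hf false) (hsum_nonneg f hf true) (hsum_nonneg g hg false)
      (hcons false false C (by simp)) (hcons true true C (by simp))
      (by linarith [hcons false true (C / 2) (by simp; ring)])
      (by linarith [hcons true false (C / 2) (by simp; ring)])

/-- The graph on the `d`-dimensional cube joining the points at Hamming distance greater than
`2 * d / 3`. -/
def farGraph (d : ℕ) : SimpleGraph (Fin d → Bool) where
  Adj x y := 2 * d < 3 * hammingDist x y
  symm := ⟨fun x y h => by rwa [hammingDist_comm]⟩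
  loopless := ⟨fun x => by simp⟩

theorem hammingDist_add_add_le_two_mul (x y z : Fin d → Bool) :
    hammingDist x y + hammingDist y z + hammingDist x z ≤ 2 * d := by
  simp only [hammingDist, card_filter, ← sum_add_distrib]
  calc _ ≤ ∑ _i : Fin d, 2 := sum_le_sum fun i _ => by
        cases x i <;> cases y i <;> cases z i <;> simp
    _ = 2 * d := by simp [mul_comm]

theorem cliqueFree_three_farGraph (d : ℕ) : (farGraph d).CliqueFree 3 := by
  intro s hs
  obtain ⟨x, y, z, hxy, hxz, hyz, -⟩ := SimpleGraph.is3Clique_iff.mp hs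
  have := hammingDist_add_add_le_two_mul x y z
  simp only [farGraph] at hxy hxz hyz
  omega

/-- Any two sets of vertices with no edge of `Γ` between them include one of at most a `1 / K`
proportion of the vertices. The two sets may overlap, unlike in a bipartite hole. -/
def HasSmallBipartiteHoles {X : Type*} [Fintype X] (Γ : SimpleGraph X) (K : ℕ) : Prop :=
  ∀ A B : Finset X, (∀ a ∈ A, ∀ b ∈ B, ¬Γ.Adj a b) →
    K * #A ≤ Fintype.card X ∨ K * #B ≤ Fintype.card X

theorem card_mul_card_le_of_forall_not_adj_farGraph {t : ℕ} {A B : Finset (Fin (3 * t) → Bool)}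
    (hAB : ∀ a ∈ A, ∀ b ∈ B, ¬(farGraph (3 * t)).Adj a b) :
    (#A * #B : ℝ) ≤ (729 / 1024) ^ t * Fintype.card (Fin (3 * t) → Bool) ^ 2 := by
  have hdist (a) (ha : a ∈ A) (b) (hb : b ∈ B) : hammingDist a b ≤ 2 * t := by
    have := hAB a ha b hb
    simp only [farGraph] at this
    omega
  calc (#A * #B : ℝ)
      = (∑ x, if x ∈ A then 1 else 0) * ∑ y, if y ∈ B then 1 else 0 := by simp
    _ ≤ 4 ^ t * (9 / 4) ^ (3 * t) := by
        refine sum_mul_sum_le_of_mul_two_pow_hammingDist_le _ _ _ (fun x => by positivity)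
          (fun y => by positivity) fun x y => ?_
        split_ifs with hx hy
        · calc (1 * 1 * 2 ^ hammingDist x y : ℝ) = 2 ^ hammingDist x y := by ring
            _ ≤ 2 ^ (2 * t) := by gcongr; exacts [one_le_two, hdist x hx y hy]
            _ = 4 ^ t := by norm_num [pow_mul]
        all_goals simp
    _ = (729 / 1024) ^ t * Fintype.card (Fin (3 * t) → Bool) ^ 2 := by
        norm_num [pow_mul, ← mul_pow, ← pow_mul']

theorem exists_hasSmallBipartiteHoles_farGraph (K : ℕ) :
    ∃ d, HasSmallBipartiteHoles (farGraph d) K := by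
  obtain ⟨t, ht⟩ := exists_pow_lt_of_lt_one (show (0 : ℝ) < 1 / (K ^ 2 + 1) by positivity)
    (show (729 / 1024 : ℝ) < 1 by norm_num)
  refine ⟨3 * t, fun A B hAB => ?_⟩
  by_contra! ⟨hA, hB⟩
  have hA : (Fintype.card (Fin (3 * t) → Bool) : ℝ) < K * #A := mod_cast hA
  have hB : (Fintype.card (Fin (3 * t) → Bool) : ℝ) < K * #B := mod_cast hB
  have hAB := card_mul_card_le_of_forall_not_adj_farGraph hAB
  set N := (Fintype.card (Fin (3 * t) → Bool) : ℝ)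
  have hN : 0 ≤ N := Nat.cast_nonneg _
  have : N ^ 2 < N ^ 2 := calc
    N ^ 2 = N * N := sq N
    _ < K * #A * (K * #B) := by gcongr
    _ = K ^ 2 * (#A * #B) := by ring
    _ ≤ (K ^ 2 + 1) * (1 / (K ^ 2 + 1) * N ^ 2) :=
        mul_le_mul (by simp) (hAB.trans (by gcongr)) (by positivity) (by positivity)
    _ = N ^ 2 := by field_simp
  exact this.false

end CubeGraph

section Labelling

variable {V X : Type*} [Fintype X]

theorem mul_card_filter_apply_mem_le {K : ℕ} {v : V} {F : Finset (V → X)}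
    {Z : (V → X) → Finset X} (hF : DependsOn (· ∈ F) {v}ᶜ) (hZ : DependsOn Z {v}ᶜ)
    (hK : ∀ l, K * #(Z l) ≤ Fintype.card X) : K * #{l ∈ F | l v ∈ Z l} ≤ #F := by
  obtain rfl | ⟨l₀, -⟩ := F.eq_empty_or_nonempty
  · simp
  have hX : 0 < Fintype.card X := Fintype.card_pos_iff.mpr ⟨l₀ v⟩
  have hupdate (l : V → X) (c : X) : ∀ u ∈ ({v}ᶜ : Set V), Function.update l v c u = l u :=
    fun u hu => Function.update_of_ne hu c l
  have hswap : #({l ∈ F | l v ∈ Z l} ×ˢ (univ : Finset X)) ≤ #(F.sigma Z) := by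
    refine card_le_card_of_injOn (fun p => ⟨Function.update p.1 v p.2, p.1 v⟩) ?_ ?_
    · rintro ⟨l, c⟩ h
      obtain ⟨hlF, hlZ⟩ : l ∈ F ∧ l v ∈ Z l := by simpa using h
      simpa [hF (hupdate l c), hZ (hupdate l c)] using ⟨hlF, hlZ⟩
    · rintro ⟨l, c⟩ - ⟨l', c'⟩ - h
      obtain ⟨hupd, hv⟩ : Function.update l v c = Function.update l' v c' ∧ l v = l' v := by
        simpa using h
      have hl : l = l' := calc
        l = Function.update (Function.update l v c) v (l v) := by simp
        _ = l' := by simp [hupd, hv]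
      have hc : c = c' := by simpa using congrFun hupd v
      rw [hl, hc]
  rw [card_product, card_univ, card_sigma] at hswap
  refine Nat.le_of_mul_le_mul_right ?_ hX
  calc K * #{l ∈ F | l v ∈ Z l} * Fintype.card X ≤ K * ∑ l ∈ F, #(Z l) := by
        rw [mul_assoc]
        gcongr
    _ ≤ #F * Fintype.card X := by
        rw [mul_sum, ← smul_eq_mul #F]
        exact sum_le_card_nsmul _ _ _ fun l _ => hK l

variable [Fintype V]

theorem pow_card_mul_card_filter_forall_apply_mem_le {K : ℕ} {T U : Finset V}
    {Z : V → (V → X) → Finset X} (hTU : Disjoint T U) (hZ : ∀ u ∈ U, DependsOn (Z u) T)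
    (hK : ∀ u ∈ U, ∀ l, K * #(Z u l) ≤ Fintype.card X) :
    K ^ #U * #{l | ∀ u ∈ U, l u ∈ Z u l} ≤ Fintype.card (V → X) := by
  induction U using Finset.induction_on with
  | empty => simp
  | insert v U hv ih =>
    simp only [forall_mem_insert, disjoint_insert_right] at hTU hZ hK
    have hT : (T : Set V) ⊆ {v}ᶜ := by simpa using hTU.1
    have hF : DependsOn (· ∈ ({l | ∀ u ∈ U, l u ∈ Z u l} : Finset (V → X))) {v}ᶜ := by
      intro l l' h
      simp only [mem_filter_univ]
      refine propext (forall₂_congr fun u hu => ?_)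
      rw [h u (ne_of_mem_of_not_mem hu hv), (hZ.2 u hu).mono hT h]
    calc K ^ #(insert v U) * #{l | ∀ u ∈ insert v U, l u ∈ Z u l}
        = K ^ #U * (K * #{l ∈ {l | ∀ u ∈ U, l u ∈ Z u l} | l v ∈ Z v l}) := by
          rw [card_insert_of_notMem hv, pow_succ, mul_assoc, filter_filter]
          simp only [forall_mem_insert, and_comm]
      _ ≤ K ^ #U * #{l | ∀ u ∈ U, l u ∈ Z u l} := by
          gcongr
          exact mul_card_filter_apply_mem_le hF (hZ.1.mono hT) hK.1
      _ ≤ Fintype.card (V → X) := ih hTU.2 hZ.2 hK.2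

theorem exists_forall_notMem_of_two_pow_mul_card_le {Ω ι : Type*} [Fintype Ω] [Nonempty Ω]
    {I : Finset ι} {E : ι → Finset Ω} {n : ι → ℕ} (hn : Set.InjOn n I)
    (hE : ∀ i ∈ I, 2 ^ (n i + 1) * #(E i) ≤ Fintype.card Ω) : ∃ ω, ∀ i ∈ I, ω ∉ E i := by
  by_contra! hcover
  set m := I.sup n
  have hle (i) (hi : i ∈ I) : n i ≤ m := le_sup hi
  have hunion : Fintype.card Ω ≤ ∑ i ∈ I, #(E i) := by
    rw [← card_univ]
    refine (card_le_card fun ω _ => ?_).trans card_biUnion_le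
    simpa using hcover ω
  have hgeom : ∑ i ∈ I, 2 ^ (m - n i) < 2 ^ (m + 1) := by
    rw [← sum_image (g := fun i => m - n i) (f := (2 ^ ·)) fun i hi j hj h =>
      hn hi hj (by have := hle i hi; have := hle j hj; dsimp only at h; omega)]
    refine Nat.geomSum_lt le_rfl ?_
    simp only [mem_image, forall_exists_index, and_imp, forall_apply_eq_imp_iff₂]
    omega
  have : 2 ^ (m + 1) * Fintype.card Ω < 2 ^ (m + 1) * Fintype.card Ω := calc
    2 ^ (m + 1) * Fintype.card Ω ≤ 2 ^ (m + 1) * ∑ i ∈ I, #(E i) := by gcongr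
    _ = ∑ i ∈ I, 2 ^ (m - n i) * (2 ^ (n i + 1) * #(E i)) := by
        rw [mul_sum]
        refine sum_congr rfl fun i hi => ?_
        rw [← mul_assoc, ← pow_add, ← add_assoc, Nat.sub_add_cancel (hle i hi)]
    _ ≤ ∑ i ∈ I, 2 ^ (m - n i) * Fintype.card Ω := by
        gcongr with i hi
        exact hE i hi
    _ < 2 ^ (m + 1) * Fintype.card Ω := by
        rw [← sum_mul]
        gcongr
  exact this.false

theorem mul_card_biUnion_le {Ω ι : Type*} [DecidableEq Ω] {P : Finset ι} {C : ι → Finset Ω}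
    {a b N : ℕ} (ha : 0 < a) (hP : #P ≤ a) (hC : ∀ p ∈ P, a * b * #(C p) ≤ N) :
    b * #(P.biUnion C) ≤ N := by
  refine Nat.le_of_mul_le_mul_left ?_ ha
  calc a * (b * #(P.biUnion C)) ≤ a * (b * ∑ p ∈ P, #(C p)) := by gcongr; exact card_biUnion_le
    _ = ∑ p ∈ P, a * b * #(C p) := by rw [← mul_assoc, mul_sum]
    _ ≤ #P * N := sum_le_card_nsmul _ _ _ hC
    _ ≤ a * N := by gcongr

theorem two_pow_mul_card_filter_exists_lt_le {q : ℕ} {Z : Finset V → V → (V → X) → Finset X}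
    (hZ : ∀ T v, DependsOn (Z T v) T) (hq : ∀ T v l, 8 ^ q * #(Z T v l) ≤ Fintype.card X)
    (L : Finset V) :
    2 ^ (#L + 1) * #{l | ∃ T ⊆ L, #L < q * #{v ∈ L \ T | l v ∈ Z T v l}} ≤
      Fintype.card (V → X) := by
  set bad : Finset (V → X) := {l | ∃ T ⊆ L, #L < q * #{v ∈ L \ T | l v ∈ Z T v l}}
  let caught (p : Finset V × Finset V) : Finset (V → X) := {l | ∀ u ∈ p.2, l u ∈ Z p.1 u l}
  let pairs : Finset (Finset V × Finset V) :=
    {p ∈ L.powerset ×ˢ L.powerset | Disjoint p.1 p.2 ∧ #L < q * #p.2}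
  have hbad : bad ⊆ pairs.biUnion caught := by
    intro l hl
    obtain ⟨T, hT, hlt⟩ := (mem_filter_univ _).mp hl
    refine mem_biUnion.mpr ⟨(T, {v ∈ L \ T | l v ∈ Z T v l}), ?_, ?_⟩
    · simp only [pairs, mem_filter, mem_product, mem_powerset]
      exact ⟨⟨hT, (filter_subset _ _).trans sdiff_subset⟩,
        disjoint_sdiff.mono_right (filter_subset _ _), hlt⟩
    · simp +contextual [caught]
  have hcaught (p) (hp : p ∈ pairs) : 8 ^ (#L + 1) * #(caught p) ≤ Fintype.card (V → X) := by
    obtain ⟨-, hdisj, hlt⟩ := mem_filter.mp hp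
    calc 8 ^ (#L + 1) * #(caught p) ≤ 8 ^ (q * #p.2) * #(caught p) := by gcongr <;> omega
      _ = (8 ^ q) ^ #p.2 * #(caught p) := by rw [pow_mul]
      _ ≤ Fintype.card (V → X) := pow_card_mul_card_filter_forall_apply_mem_le hdisj
          (fun u _ => hZ p.1 u) fun u _ => hq p.1 u
  have hpairs : #pairs ≤ 4 ^ (#L + 1) := calc
    #pairs ≤ #(L.powerset ×ˢ L.powerset) := card_filter_le _ _
    _ = 4 ^ #L := by simp [← mul_pow]
    _ ≤ 4 ^ (#L + 1) := by gcongr <;> omega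
  calc 2 ^ (#L + 1) * #bad ≤ 2 ^ (#L + 1) * #(pairs.biUnion caught) := by gcongr
    _ ≤ Fintype.card (V → X) := mul_card_biUnion_le (by positivity) hpairs fun p hp => by
        simpa [← mul_pow] using hcaught p hp

theorem exists_forall_isChain_mul_card_le {V : Type*} [Finite V] [Nonempty X] {q : ℕ}
    {Z : Finset V → V → (V → X) → Finset X} {𝓛 : Set (Finset V)} (h𝓛 : IsChain (· ⊆ ·) 𝓛)
    (hZ : ∀ T v, DependsOn (Z T v) T) (hq : ∀ T v l, 8 ^ q * #(Z T v l) ≤ Fintype.card X) :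
    ∃ l : V → X, ∀ L ∈ 𝓛, ∀ T ⊆ L, q * #{v ∈ L \ T | l v ∈ Z T v l} ≤ #L := by
  have := Fintype.ofFinite V
  have hcard : Set.InjOn card 𝓛 := by
    intro L hL L' hL' h
    obtain hLL' | hLL' := h𝓛.total hL hL'
    · exact eq_of_subset_of_card_le hLL' h.ge
    · exact (eq_of_subset_of_card_le hLL' h.le).symm
  obtain ⟨l, hl⟩ := exists_forall_notMem_of_two_pow_mul_card_le (I := 𝓛.toFinset) (n := card)
    (by simpa using hcard) fun L _ => two_pow_mul_card_filter_exists_lt_le hZ hq L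
  refine ⟨l, fun L hL => ?_⟩
  simpa using hl L (Set.mem_toFinset.mpr hL)

end Labelling

section Trapping

theorem exists_isIndepSet_forall_exists_adj_le {V α : Type*} [LinearOrder α] (A : SimpleGraph V)
    (f : V → α) (S : Finset V) :
    ∃ T ⊆ S, A.IsIndepSet T ∧ ∀ v ∈ S \ T, ∃ u ∈ T, A.Adj v u ∧ f v ≤ f u := by
  induction S using Finset.induction_on_min_value f with
  | empty => exact ⟨∅, by simp [SimpleGraph.isIndepSet_iff]⟩
  | insert v S hv hmin ih =>
    obtain ⟨T, hTS, hT, hdom⟩ := ih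
    by_cases hnbr : ∃ u ∈ T, A.Adj v u
    · obtain ⟨u, hu, hvu⟩ := hnbr
      refine ⟨T, hTS.trans (subset_insert v S), hT, fun x hx => ?_⟩
      obtain ⟨rfl | hxS, hxT⟩ := by simpa only [mem_sdiff, mem_insert] using hx
      · exact ⟨u, hu, hvu, hmin u (hTS hu)⟩
      · exact hdom x (mem_sdiff.mpr ⟨hxS, hxT⟩)
    · push Not at hnbr
      refine ⟨insert v T, insert_subset_insert v hTS, ?_, fun x hx => ?_⟩
      · rw [coe_insert, SimpleGraph.isIndepSet_iff]
        exact hT.insert fun u hu _ => ⟨hnbr u hu, fun h => hnbr u hu h.symm⟩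
      · rw [insert_sdiff_insert, sdiff_insert] at hx
        obtain ⟨u, hu, hxu⟩ := hdom x (erase_subset _ _ hx)
        exact ⟨u, mem_insert_of_mem hu, hxu⟩

theorem mul_sum_le_sum_of_forall_mul_card_superlevel_le {V : Type*} {A B : Finset V} {w : V → ℝ}
    {c : ℝ} (hw : ∀ v, 0 ≤ w v) (hAB : ∀ s, c * #{v ∈ A | s ≤ w v} ≤ #{v ∈ B | s ≤ w v}) :
    c * ∑ v ∈ A, w v ≤ ∑ v ∈ B, w v := by
  have hintegrable (v) : MeasureTheory.Integrable ((Set.Ioc 0 (w v)).indicator (1 : ℝ → ℝ)) :=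
    (MeasureTheory.integrable_indicator_iff measurableSet_Ioc).mpr
      (MeasureTheory.integrableOn_const (by simp))
  have hintegrable_sum (C : Finset V) :
      MeasureTheory.Integrable fun s => ∑ v ∈ C, (Set.Ioc 0 (w v)).indicator (1 : ℝ → ℝ) s :=
    MeasureTheory.integrable_finsetSum C fun v _ => hintegrable v
  have layer_cake (C : Finset V) :
      ∑ v ∈ C, w v = ∫ s, ∑ v ∈ C, (Set.Ioc 0 (w v)).indicator (1 : ℝ → ℝ) s := by
    rw [MeasureTheory.integral_finsetSum C fun v _ => hintegrable v]
    refine sum_congr rfl fun v _ => ?_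
    rw [MeasureTheory.integral_indicator_one measurableSet_Ioc,
      Real.volume_real_Ioc_of_le (hw v), sub_zero]
  rw [layer_cake A, layer_cake B, ← MeasureTheory.integral_const_mul]
  refine MeasureTheory.integral_mono ((hintegrable_sum A).const_mul c) (hintegrable_sum B)
    fun s => ?_
  obtain hs | hs := le_or_gt s 0
  · simp [hs.not_gt]
  · simpa [Set.indicator_apply, hs] using hAB s

variable {V X : Type*} [Fintype X] {Γ : SimpleGraph X} {K : ℕ}

/-- A set of labels containing every label in `L` that is `Γ`-adjacent to none of `L`. It is `L`
itself when `L` is small, and all the labels `Γ`-adjacent to none of `L` otherwise: if `Γ` has small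
bipartite holes, it is small in both cases. -/
noncomputable def trapped (Γ : SimpleGraph X) (K : ℕ) (L : Finset X) : Finset X :=
  if K * #L ≤ Fintype.card X then L else univ.filter fun a => ∀ b ∈ L, ¬Γ.Adj a b

theorem mem_trapped {L : Finset X} {a : X} (ha : a ∈ L) (hL : ∀ b ∈ L, ¬Γ.Adj a b) :
    a ∈ trapped Γ K L := by
  unfold trapped
  split_ifs
  exacts [ha, (mem_filter_univ a).mpr hL]

theorem HasSmallBipartiteHoles.mul_card_trapped_le (hΓ : HasSmallBipartiteHoles Γ K)
    (L : Finset X) : K * #(trapped Γ K L) ≤ Fintype.card X := by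
  unfold trapped
  split_ifs with hL
  · exact hL
  · exact (hΓ {a | ∀ b ∈ L, ¬Γ.Adj a b} L fun a ha => (mem_filter_univ a).mp ha).resolve_right hL

theorem apply_mem_trapped_image {G : SimpleGraph V} {l : V → X} {S N : Finset V} {u v : V}
    (hS : (G ⊓ Γ.comap l).IsIndepSet S) (hv : v ∈ S) (hNS : N ⊆ S) (hN : ∀ x ∈ N, G.Adj v x)
    (hu : u ∈ N) (huv : l v = l u) : l v ∈ trapped Γ K (N.image l) := by
  refine mem_trapped (huv ▸ mem_image_of_mem l hu) ?_
  rw [forall_mem_image]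
  exact fun x hx hadj => hS hv (hNS hx) (hN x hx).ne ⟨hN x hx, hadj⟩

theorem exists_labelling_forall_isIndepSet_exists_subset [Fintype V] [Nonempty X] {q : ℕ}
    (G : SimpleGraph V) (hΓ : HasSmallBipartiteHoles Γ (8 ^ q)) {w : V → ℝ} (hw : ∀ v, 0 ≤ w v) :
    ∃ l : V → X, ∀ S : Finset V, (G ⊓ Γ.comap l).IsIndepSet S →
      ∃ T ⊆ S, (G \ (⊤ : SimpleGraph X).comap l).IsIndepSet T ∧
        q * ∑ v ∈ S \ T, w v ≤ ∑ v, w v := by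
  let heavy (T : Finset V) (v : V) : Finset V := {u ∈ T | G.Adj v u ∧ w v ≤ w u}
  let Z (T : Finset V) (v : V) (l : V → X) : Finset X := trapped Γ (8 ^ q) ((heavy T v).image l)
  have hZ (T v) : DependsOn (Z T v) T := fun l l' h =>
    congrArg (trapped Γ (8 ^ q)) (image_congr fun u hu => h u (filter_subset _ _ hu))
  have hchain : IsChain (· ⊆ ·) (Set.range fun s : ℝ => ({v | s ≤ w v} : Finset V)) := by
    refine Antitone.isChain_range fun s s' h => ?_
    exact monotone_filter_right _ fun v _ => h.trans
  obtain ⟨l, hl⟩ := exists_forall_isChain_mul_card_le hchain hZ fun T v l =>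
    hΓ.mul_card_trapped_le _
  refine ⟨l, fun S hS => ?_⟩
  obtain ⟨T, hTS, hT, hdom⟩ :=
    exists_isIndepSet_forall_exists_adj_le (G \ (⊤ : SimpleGraph X).comap l) w S
  refine ⟨T, hTS, hT, ?_⟩
  have hsuperlevel (s : ℝ) : q * #{v ∈ S \ T | s ≤ w v} ≤ #{v | s ≤ w v} := by
    set L : Finset V := {v | s ≤ w v} with hL
    have hsub : {v ∈ S \ T | s ≤ w v} ⊆ {v ∈ L \ (T ∩ L) | l v ∈ Z (T ∩ L) v l} := by
      intro v hv
      obtain ⟨hvST, hsv⟩ := mem_filter.mp hv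
      obtain ⟨hvS, hvT⟩ := mem_sdiff.mp hvST
      obtain ⟨u, hu, ⟨hGvu, hlvu⟩, hle⟩ := hdom v hvST
      have hlvu : l v = l u := by simpa [hGvu] using hlvu
      have hu : u ∈ heavy (T ∩ L) v := by simp [heavy, hL, hu, hGvu, hle, hsv.trans hle]
      have htrap : l v ∈ Z (T ∩ L) v l := by
        refine apply_mem_trapped_image hS hvS (fun x hx => ?_) (fun x hx => ?_) hu hlvu
        · exact hTS (mem_inter.mp (mem_filter.mp hx).1).1
        · exact (mem_filter.mp hx).2.1
      have hvL : v ∈ L := by simpa [hL] using hsv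
      simp [hvL, hvT, htrap]
    calc q * #{v ∈ S \ T | s ≤ w v} ≤ q * #{v ∈ L \ (T ∩ L) | l v ∈ Z (T ∩ L) v l} := by gcongr
      _ ≤ #L := hl L ⟨s, rfl⟩ (T ∩ L) inter_subset_right
  exact mul_sum_le_sum_of_forall_mul_card_superlevel_le hw fun s => mod_cast hsuperlevel s

theorem mul_sum_le_card_of_isIndepSet_sdiff_comap_top {G : SimpleGraph V} {l : V → X} {w : V → ℝ}
    {c : ℝ} {T : Finset V} (hc : ∀ I : Finset V, G.IsIndepSet I → c * ∑ v ∈ I, w v ≤ 1)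
    (hT : (G \ (⊤ : SimpleGraph X).comap l).IsIndepSet T) :
    c * ∑ v ∈ T, w v ≤ Fintype.card X := by
  have hclass (a : X) : G.IsIndepSet (({v ∈ T | l v = a} : Finset V) : Set V) := by
    intro u hu v hv huv hadj
    obtain ⟨huT, rfl⟩ := mem_filter.mp hu
    obtain ⟨hvT, hvu⟩ := mem_filter.mp hv
    exact hT huT hvT huv ⟨hadj, by simp [hvu]⟩
  calc c * ∑ v ∈ T, w v = ∑ a : X, c * ∑ v ∈ T with l v = a, w v := by
        rw [← mul_sum, sum_fiberwise T l w]
    _ ≤ ∑ _a : X, 1 := sum_le_sum fun a _ => hc _ (hclass a)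
    _ = Fintype.card X := by simp

end Trapping

theorem exists_labelling_le_fracChrom {V : Type} {X : Type*} [Fintype V] [Fintype X] [Nonempty X]
    {Γ : SimpleGraph X} {q : ℕ} {x : ℝ} (hΓ : HasSmallBipartiteHoles Γ (8 ^ q)) (hq : 2 * x ≤ q)
    (G : SimpleGraph V) (hG : 2 * x * Fintype.card X ≤ fracChrom G) :
    ∃ l : V → X, x ≤ fracChrom (G ⊓ Γ.comap l) := by
  have hX : (0 : ℝ) < Fintype.card X := mod_cast Fintype.card_pos
  obtain hV | hV := isEmpty_or_nonempty V
  · refine ⟨isEmptyElim, ?_⟩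
    rw [fracChrom_of_isEmpty] at hG ⊢
    exact nonpos_of_mul_nonpos_left (by linarith) hX
  obtain ⟨w, hw, hdual⟩ := exists_stdSimplex_forall_isIndepSet_fracChrom_mul_le G
  obtain ⟨l, hl⟩ := exists_labelling_forall_isIndepSet_exists_subset G hΓ hw.1
  refine ⟨l, le_fracChrom_of_forall_isIndepSet hw fun S hS => ?_⟩
  obtain ⟨T, hTS, hT, hST⟩ := hl S hS
  have hT_le : 2 * x * ∑ v ∈ T, w v ≤ 1 := by
    refine le_of_mul_le_mul_right ?_ hX
    calc 2 * x * (∑ v ∈ T, w v) * Fintype.card X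
        = 2 * x * Fintype.card X * ∑ v ∈ T, w v := by ring
      _ ≤ fracChrom G * ∑ v ∈ T, w v := by gcongr; exact sum_nonneg fun v _ => hw.1 v
      _ ≤ 1 * Fintype.card X := by
          rw [one_mul]
          exact mul_sum_le_card_of_isIndepSet_sdiff_comap_top hdual hT
  have hST_le : 2 * x * ∑ v ∈ S \ T, w v ≤ 1 := calc
    2 * x * ∑ v ∈ S \ T, w v ≤ q * ∑ v ∈ S \ T, w v := by
      gcongr
      exact sum_nonneg fun v _ => hw.1 v
    _ ≤ 1 := hST.trans_eq hw.2
  rw [← sum_sdiff hTS]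
  linarith

theorem cliqueFree_of_hom {V W : Type*} {G : SimpleGraph V} {H : SimpleGraph W} {n : ℕ}
    (f : G →g H) (hH : H.CliqueFree n) : G.CliqueFree n := by
  rw [SimpleGraph.cliqueFree_iff] at hH ⊢
  exact ⟨fun c => hH.false ⟨f.comp c.toHom, SimpleGraph.Hom.injective_of_top_hom _⟩⟩

theorem triangle_free_subgraph_large_frac_chrom (x : ℝ) (hx : 1 ≤ x) :
    ∃ k : ℝ, 0 < k ∧
      ∀ (V : Type) [Fintype V] (G : SimpleGraph V),
        k ≤ fracChrom G →
        ∃ H : G.Subgraph, H.coe.CliqueFree 3 ∧ x ≤ fracChrom H.coe := by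
  obtain ⟨q, hq⟩ := exists_nat_ge (2 * x)
  obtain ⟨d, hd⟩ := exists_hasSmallBipartiteHoles_farGraph (8 ^ q)
  refine ⟨2 * x * Fintype.card (Fin d → Bool), by positivity, fun V _ G hG => ?_⟩
  obtain ⟨l, hl⟩ := exists_labelling_le_fracChrom hd hq G hG
  let H : G.Subgraph := SimpleGraph.toSubgraph (G ⊓ (farGraph d).comap l) inf_le_left
  let toH : G ⊓ (farGraph d).comap l →g H.coe := ⟨fun v => ⟨v, trivial⟩, id⟩
  let toFarGraph : H.coe →g farGraph d := ⟨fun v => l v, fun h => h.2⟩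
  exact ⟨H, cliqueFree_of_hom toFarGraph (cliqueFree_three_farGraph d),
    hl.trans (fracChrom_le_of_hom toH)⟩
end

section
/- For every positive integer k there exists an integer f(k) such that every finite simple graph G with chromatic number χ(G) ≥ f(k) contains a triangle-free subgraph H with χ(H) = k. -/
open scoped Classical

/-!
Fix a linear order on the vertices of `G` and suppose that every neighbourhood is `M`-colourable,
with chosen colourings. Label an edge `uv` with `u < v` by the colour of `v` in the neighbourhood
of `u`. A triangle with smallest vertex `u` and a single label would give the other two vertices
the same colour in the neighbourhood of `u`, so each of the `M` label classes is triangle-free; and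
if all of them are `k`-colourable, the product of the colourings colours `G` with `k ^ M` colours.
Hence a `K_{w+1}`-free graph that is not `k ^ M`-colourable either has a triangle-free subgraph that
is not `k`-colourable or a `K_w`-free neighbourhood that is not `M`-colourable, and one recurses
on `w`. A graph with large cliques contains every small graph, in particular a shift graph.
Compactness and vertex deletion finally lower the chromatic number to the exact value.
-/

section RodlTheorem

open SimpleGraph

universe u

variable {V W : Type*} {G : SimpleGraph V} {k m n : ℕ}

section Colorings

lemma colorable_pow_card_of_iSup {ι : Type*} [Fintype ι] {K : ι → SimpleGraph V}
    (hK : ∀ i, (K i).Colorable k) : (⨆ i, K i).Colorable (k ^ Fintype.card ι) := by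
  let c (i : ι) : (K i).Coloring (Fin k) := (hK i).some
  have hc : ∀ {u v}, (⨆ i, K i).Adj u v → (fun i ↦ c i u) ≠ fun i ↦ c i v := by
    intro u v huv heq
    obtain ⟨i, hi⟩ := iSup_adj.1 huv
    exact (c i).valid hi (congrFun heq i)
  simpa using (Coloring.mk (fun v i ↦ c i v) hc).colorable

lemma colorable_induce_union {s t : Set V} (hs : (G.induce s).Colorable m)
    (ht : (G.induce t).Colorable n) : (G.induce (s ∪ t)).Colorable (m + n) := by
  obtain ⟨c⟩ := hs
  obtain ⟨d⟩ := ht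
  let color (v : ↥(s ∪ t)) : Fin m ⊕ Fin n :=
    if h : v.1 ∈ s then .inl (c ⟨v, h⟩) else .inr (d ⟨v, v.2.resolve_left h⟩)
  have valid : ∀ {u v}, (G.induce (s ∪ t)).Adj u v → color u ≠ color v := by
    intro u v huv
    by_cases hu : u.1 ∈ s <;> by_cases hv : v.1 ∈ s <;> simp only [color, hu, hv, dite_true,
      dite_false, ne_eq, Sum.inl.injEq, Sum.inr.injEq, reduceCtorEq, not_false_eq_true]
    · exact c.valid huv
    · exact d.valid huv
  simpa using (Coloring.mk color valid).colorable

-- The contrapositive of the de Bruijn–Erdős theorem.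
lemma exists_finset_not_colorable_induce (hG : ¬ G.Colorable k) :
    ∃ s : Finset V, ¬ (G.induce (s : Set V)).Colorable k := by
  contrapose! hG
  refine nonempty_hom_of_forall_finite_subgraph_hom fun G' hfin ↦ ?_
  have hcol : (G.induce G'.verts).Colorable k := hfin.coe_toFinset ▸ hG hfin.toFinset
  exact hcol.some.comp ⟨id, fun h ↦ G'.adj_sub h⟩

lemma exists_finset_chromaticNumber_induce_eq (hG : ¬ G.Colorable k) :
    ∃ s : Finset V, (G.induce (s : Set V)).chromaticNumber = k + 1 := by
  obtain ⟨s, hs⟩ := exists_minimal_of_wellFoundedLT _ (exists_finset_not_colorable_induce hG)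
  refine ⟨s, chromaticNumber_eq_iff_colorable_not_colorable.2 ⟨?_, hs.prop⟩⟩
  obtain ⟨v, hv⟩ : s.Nonempty := by
    rw [Finset.nonempty_iff_ne_empty]
    rintro rfl
    have : IsEmpty ↥((∅ : Finset V) : Set V) := by simp
    exact hs.prop (.of_isEmpty k)
  have herase : (G.induce (s.erase v : Set V)).Colorable k :=
    not_not.1 (hs.not_prop_of_lt (Finset.erase_ssubset hv))
  have hsingle : (G.induce {v}).Colorable 1 := colorable_one_iff.2 (Subsingleton.elim _ _)
  have hunion : (↑(s.erase v) ∪ {v} : Set V) = s := by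
    rw [← Finset.coe_singleton, ← Finset.coe_union, Finset.union_comm, ← Finset.insert_eq,
      Finset.insert_erase hv]
  exact hunion ▸ colorable_induce_union herase hsingle

lemma exists_subgraph_chromaticNumber_eq {A : SimpleGraph W} (hAG : A ⊑ G)
    (hfree : A.CliqueFree n) (hA : ¬ A.Colorable k) :
    ∃ H : G.Subgraph, H.coe.CliqueFree n ∧ H.coe.chromaticNumber = k + 1 := by
  obtain ⟨s, hs⟩ := exists_finset_chromaticNumber_induce_eq hA
  have hsA : A.induce (s : Set W) ⊑ A := (Copy.induce A s).isContained
  obtain ⟨H, ⟨e⟩⟩ := isContained_iff_exists_iso_subgraph.1 (hsA.trans hAG)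
  exact ⟨H, hfree.comap (e.isContained'.trans hsA), (chromaticNumber_congr e).symm.trans hs⟩

end Colorings

section Cliques

lemma cliqueFree_induce_neighborSet (hG : G.CliqueFree (n + 1)) (v : V) :
    (G.induce (G.neighborSet v)).CliqueFree n := by
  intro s hs
  have hmap : G.IsNClique n (s.map (.subtype _)) := hs.map.mono (map_comap_le _ _)
  refine hG _ (hmap.insert (a := v) fun b hb ↦ ?_)
  obtain ⟨u, -, rfl⟩ := Finset.mem_map.1 hb
  exact u.2

lemma isContained_of_not_cliqueFree_card [Fintype W] (A : SimpleGraph W)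
    (hG : ¬ G.CliqueFree (Fintype.card W)) : A ⊑ G :=
  (isContained_top_iff.2 ⟨(Fintype.equivFin W).toEmbedding⟩).trans
    ((not_cliqueFree_iff_top_isContained _).1 hG)

lemma cliqueFree_three_of_forall_lt [LinearOrder V]
    (hG : ∀ u v w, u < v → u < w → G.Adj u v → G.Adj u w → ¬ G.Adj v w) : G.CliqueFree 3 := by
  intro s hs
  obtain ⟨a, b, c, hab, hac, hbc, -⟩ := is3Clique_iff.1 hs
  rcases lt_or_gt_of_ne hab.ne with h | h
  · rcases lt_or_gt_of_ne hac.ne with h' | h'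
    · exact hG a b c h h' hab hac hbc
    · exact hG c a b h' (h'.trans h) hac.symm hbc.symm hab
  · rcases lt_or_gt_of_ne hbc.ne with h' | h'
    · exact hG b a c h h' hab.symm hbc hac
    · exact hG c a b (h'.trans h) h' hac.symm hbc.symm hab

end Cliques

section ShiftGraph

/-- The shift graph of `α`: its vertices are the increasing pairs, and `(a, b)` is adjacent to
`(b, c)`. It serves as a triangle-free graph of large chromatic number. -/
def shiftGraph (α : Type*) [Preorder α] : SimpleGraph {p : α × α // p.1 < p.2} where
  Adj p q := p.1.2 = q.1.1 ∨ q.1.2 = p.1.1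
  symm := ⟨fun _ _ ↦ Or.symm⟩
  loopless := ⟨fun p h ↦ h.elim p.2.ne' p.2.ne'⟩

lemma cliqueFree_three_shiftGraph (α : Type*) [Preorder α] : (shiftGraph α).CliqueFree 3 := by
  intro s hs
  obtain ⟨⟨p, hp⟩, ⟨q, hq⟩, ⟨r, hr⟩, hpq, hpr, hqr, -⟩ := is3Clique_iff.1 hs
  simp only [shiftGraph] at hpq hpr hqr
  grind

-- Send `a` to the set of colours of the pairs `(a, b)`. If `a < b`, the colour of `(a, b)` lies in
-- the set of `a` but not in that of `b`.
lemma card_le_two_pow_of_colorable_shiftGraph {α : Type*} [LinearOrder α] [Fintype α]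
    (h : (shiftGraph α).Colorable k) : Fintype.card α ≤ 2 ^ k := by
  obtain ⟨c⟩ := h
  let S (a : α) : Set (Fin k) := {x | ∃ (b : α) (hab : a < b), c ⟨(a, b), hab⟩ = x}
  have hS : ∀ a b, a < b → S a ≠ S b := by
    intro a b hab heq
    obtain ⟨d, hbd, hcol⟩ : c ⟨(a, b), hab⟩ ∈ S b := heq ▸ ⟨b, hab, rfl⟩
    exact c.valid (.inr rfl) hcol
  have hinj : Function.Injective S := Function.Injective.of_lt_imp_ne hS
  simpa using Fintype.card_le_of_injective S hinj

end ShiftGraph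

section NeighborhoodColorings

variable {κ : Type*} [LinearOrder V]

/-- The edge labelling of `G` induced by a colouring `c v` of each neighbourhood: an edge is given
the colour of its larger endpoint in the neighbourhood of its smaller endpoint. -/
noncomputable def neighborLabeling (c : ∀ v, (G.induce (G.neighborSet v)).Coloring κ) :
    G.EdgeLabeling κ :=
  .mk (fun u v h ↦ if u < v then c u ⟨v, h⟩ else c v ⟨u, h.symm⟩) fun u v h ↦ by
    rcases lt_or_gt_of_ne h.ne with huv | huv <;> simp [huv, huv.not_gt]

lemma get_neighborLabeling_of_lt (c : ∀ v, (G.induce (G.neighborSet v)).Coloring κ) {u v : V}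
    (huv : u < v) (h : G.Adj u v) : (neighborLabeling c).get u v h = c u ⟨v, h⟩ := by
  simp only [neighborLabeling, EdgeLabeling.get_mk, if_pos huv]

lemma cliqueFree_three_labelGraph_neighborLabeling
    (c : ∀ v, (G.induce (G.neighborSet v)).Coloring κ) (i : κ) :
    ((neighborLabeling c).labelGraph i).CliqueFree 3 := by
  refine cliqueFree_three_of_forall_lt fun u v w huv huw hv hw hvw ↦ ?_
  obtain ⟨hadjv, hlabelv⟩ := (EdgeLabeling.labelGraph_adj u v).1 hv
  obtain ⟨hadjw, hlabelw⟩ := (EdgeLabeling.labelGraph_adj u w).1 hw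
  have hcolor : c u ⟨v, hadjv⟩ = c u ⟨w, hadjw⟩ := by
    rw [← get_neighborLabeling_of_lt c huv, ← get_neighborLabeling_of_lt c huw]
    exact hlabelv.trans hlabelw.symm
  have hadj : (G.induce (G.neighborSet u)).Adj ⟨v, hadjv⟩ ⟨w, hadjw⟩ :=
    (neighborLabeling c).labelGraph_le hvw
  exact (c u).valid hadj hcolor

end NeighborhoodColorings

lemma exists_le_cliqueFree_three_not_colorable
    (hN : ∀ v, (G.induce (G.neighborSet v)).Colorable m) (hG : ¬ G.Colorable (k ^ m)) :
    ∃ H ≤ G, H.CliqueFree 3 ∧ ¬ H.Colorable k := by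
  let : LinearOrder V := linearOrderOfSTO WellOrderingRel
  let C := neighborLabeling fun v ↦ (hN v).some
  obtain ⟨i, hi⟩ : ∃ i, ¬ (C.labelGraph i).Colorable k := by
    contrapose! hG
    simpa [EdgeLabeling.iSup_labelGraph] using colorable_pow_card_of_iSup hG
  exact ⟨C.labelGraph i, C.labelGraph_le, cliqueFree_three_labelGraph_neighborLabeling _ i, hi⟩

lemma exists_isContained_cliqueFree_three_not_colorable {w : ℕ} {V : Type u} {G : SimpleGraph V}
    (hfree : G.CliqueFree w) (hG : ¬ G.Colorable ((k ^ ·)^[w] 0)) :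
    ∃ (W : Type u) (H : SimpleGraph W), H ⊑ G ∧ H.CliqueFree 3 ∧ ¬ H.Colorable k := by
  induction w generalizing V with
  | zero => exact absurd (isNClique_empty.2 rfl) (hfree ∅)
  | succ w ih =>
    rw [Function.iterate_succ_apply'] at hG
    by_cases hN : ∀ v, (G.induce (G.neighborSet v)).Colorable ((k ^ ·)^[w] 0)
    · obtain ⟨H, hHG, hH⟩ := exists_le_cliqueFree_three_not_colorable hN hG
      exact ⟨V, H, .of_le hHG, hH⟩
    · obtain ⟨v, hv⟩ := not_forall.1 hN
      obtain ⟨W, H, hHN, hH⟩ := ih (cliqueFree_induce_neighborSet hfree v) hv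
      exact ⟨W, H, hHN.trans (Copy.induce G _).isContained, hH⟩

theorem rodl_triangle_free_subgraph_general (k : ℕ) (hk : 0 < k) :
    ∃ f : ℕ, ∀ (V : Type u) (G : SimpleGraph V), (f : ℕ∞) ≤ G.chromaticNumber →
      ∃ H : G.Subgraph, H.coe.CliqueFree 3 ∧ H.coe.chromaticNumber = k := by
  obtain ⟨k, rfl⟩ := Nat.exists_eq_add_one.2 hk
  let A := shiftGraph (Fin (2 ^ k + 1))
  have hA : ¬ A.Colorable k := fun h ↦ by
    simpa using card_le_two_pow_of_colorable_shiftGraph h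
  let w := Fintype.card {p : Fin (2 ^ k + 1) × Fin (2 ^ k + 1) // p.1 < p.2}
  refine ⟨(k ^ ·)^[w] 0 + 1, fun V G hG ↦ ?_⟩
  have hGcol : ¬ G.Colorable ((k ^ ·)^[w] 0) := fun h ↦
    Nat.not_succ_le_self _ (Nat.cast_le.1 (hG.trans h.chromaticNumber_le))
  by_cases hfree : G.CliqueFree w
  · obtain ⟨_, H, hHG, hH, hHcol⟩ :=
      exists_isContained_cliqueFree_three_not_colorable hfree hGcol
    exact exists_subgraph_chromaticNumber_eq hHG hH hHcol
  · exact exists_subgraph_chromaticNumber_eq (isContained_of_not_cliqueFree_card A hfree)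
      (cliqueFree_three_shiftGraph _) hA

end RodlTheorem

theorem rodl_triangle_free_subgraph (k : ℕ) (hk : 0 < k) :
    ∃ f : ℕ, ∀ (V : Type) [Fintype V] (G : SimpleGraph V),
      (f : ℕ∞) ≤ G.chromaticNumber →
      ∃ H : G.Subgraph, H.coe.CliqueFree 3 ∧ H.coe.chromaticNumber = k := by
  obtain ⟨f, hf⟩ := rodl_triangle_free_subgraph_general k hk
  exact ⟨f, fun V _ G hG ↦ hf V G hG⟩
end

section
/- The Erdős–Hajnal conjecture holds for Kneser graphs: for all positive integers k and g, there exists an integer h(k,g) such that every Kneser graph KG(n,m) with 0 < m ≤ n/2 and chromatic number χ(KG(n,m)) = n − 2m + 2 ≥ h(k,g) contains a subgraph with chromatic number at least k and girth at least g. -/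
open scoped Classical

/-- The Kneser graph `KG(n,m)`: vertices are the `m`-element subsets of `{1,…,n}`,
two vertices being adjacent iff the corresponding sets are disjoint. -/
def kneser (n m : ℕ) : SimpleGraph {s : Finset (Fin n) // s.card = m} :=
  SimpleGraph.fromRel fun a b => Disjoint a.1 b.1

/-!
The subgraph of `KG(2m + k, m)` induced on the stable sets is not `k`-colorable, by Tucker's lemma,
although its order is at most a polynomial in `m`. Automorphisms of `KG(n, m)` act transitively on
its darts, so averaging over the copies of this subgraph shows that every map from the vertices to
`k` colors makes at least a fraction `1 / q` of the darts monochromatic, with `q` polynomial in `m`.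

Now add edges of `KG(n, m)` greedily to the empty graph, keeping the degrees bounded and creating no
short cycle. These two restrictions exclude few darts, so some admissible edge is monochromatic for
a fraction `1 / (2 * q)` of the proper `k`-colorings that remain. If there are `N` vertices, then
after `2 * q * k * N` edges at most `k ^ N * exp (-k * N) < 1` colorings are left. There is
enough room for this because the degree `(n - m).choose m` exceeds any given power of `m` once
`n - 2 * m` is large.
-/

section Alternation

variable {α : Type*}

/-- The indicator, in `ZMod 2`, of the signs `s` alternating along a list, starting with `b`. -/
def alternation (s : α → Bool) : Bool → List α → ZMod 2
  | _, [] => 1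
  | b, a :: l => if s a = b then alternation s (!b) l else 0

lemma alternation_not (s : α → Bool) (b : Bool) (l : List α) :
    alternation (fun a => !s a) b l = alternation s (!b) l := by
  induction l generalizing b with
  | nil => rfl
  | cons a l ih => simp only [alternation, ih, Bool.not_eq_eq_eq_not]

lemma alternation_congr {s t : α → Bool} {l : List α} (h : ∀ a ∈ l, s a = t a) (b : Bool) :
    alternation s b l = alternation t b l := by
  induction l generalizing b with
  | nil => rfl
  | cons a l ih =>
    rw [List.forall_mem_cons] at h
    simp only [alternation, h.1, ih h.2]

lemma isChain_of_alternation_ne_zero {s : α → Bool} {b : Bool} {l : List α}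
    (h : alternation s b l ≠ 0) : l.IsChain (s · ≠ s ·) := by
  induction l generalizing b with
  | nil => exact .nil
  | cons a l ih =>
    obtain ⟨rfl, hl⟩ : s a = b ∧ alternation s (!b) l ≠ 0 := by
      simpa only [alternation, ne_eq, ite_eq_right_iff, Classical.not_imp] using h
    cases l with
    | nil => exact .singleton a
    | cons c l =>
      refine .cons_cons (fun hac => hl ?_) (ih hl)
      simp [alternation, hac]

lemma sum_alternation_erase [DecidableEq α] (s : α → Bool) {l : List α} (hl : l.Nodup) (b : Bool) :
    (l.map fun a => alternation s b (l.erase a)).sum =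
      alternation s b l + alternation s (!b) l := by
  induction l generalizing b with
  | nil => simp [alternation, CharTwo.add_self_eq_zero]
  | cons a l ih =>
    obtain ⟨ha, hl⟩ := List.nodup_cons.1 hl
    have erase_tail : ∀ c ∈ l, (a :: l).erase c = a :: l.erase c := fun c hc =>
      List.erase_cons_tail (by simpa using fun h : a = c => ha (h ▸ hc))
    have tail : (l.map fun c => alternation s b ((a :: l).erase c)).sum =
        if s a = b then (l.map fun c => alternation s (!b) (l.erase c)).sum else 0 := by
      rw [List.map_congr_left fun c hc => by rw [erase_tail c hc, alternation]]
      split_ifs <;> simp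
    rw [List.map_cons, List.sum_cons, List.erase_cons_head, tail, ih hl]
    by_cases h : s a = b
    · simp [alternation, h, add_comm (alternation s (!b) l), CharTwo.add_cancel_left]
    · simp [alternation, Bool.eq_not.2 h]

variable [LinearOrder α] {κ : Type*} [LinearOrder κ]

/-- The order of the indices of a signed label sequence `ℓ` by label, ties being broken by the
index itself. -/
def labelLE (ℓ : α → κ × Bool) (i j : α) : Prop :=
  toLex ((ℓ i).1, i) ≤ toLex ((ℓ j).1, j)

instance (ℓ : α → κ × Bool) : IsTrans α (labelLE ℓ) :=
  ⟨fun _ _ _ => le_trans (α := κ ×ₗ α)⟩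

instance (ℓ : α → κ × Bool) : Std.Antisymm (labelLE ℓ) :=
  ⟨fun _ _ h h' => (Prod.ext_iff.1 (toLex.injective (le_antisymm h h'))).2⟩

instance (ℓ : α → κ × Bool) : Std.Total (labelLE ℓ) :=
  ⟨fun _ _ => le_total (α := κ ×ₗ α) _ _⟩

/-- The indicator, in `ZMod 2`, of the signs of `ℓ` alternating on `J`, starting with `b`, when `J`
is ordered by label. For a sequence without complementary labels this says that the labels on `J`
are distinct and alternate in sign. -/
noncomputable def labelAlternation (ℓ : α → κ × Bool) (b : Bool) (J : Finset α) : ZMod 2 :=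
  alternation (fun j => (ℓ j).2) b (J.sort (labelLE ℓ))

lemma labelAlternation_congr {ℓ ℓ' : α → κ × Bool} {J : Finset α} (h : ∀ j ∈ J, ℓ j = ℓ' j)
    (b : Bool) : labelAlternation ℓ b J = labelAlternation ℓ' b J := by
  have hsort := J.map_sort (.refl α) (labelLE ℓ) (labelLE ℓ') fun i hi j hj => by
    simp only [labelLE, h i hi, h j hj, Function.Embedding.refl_apply]
  simp only [Function.Embedding.coe_refl, List.map_id, Finset.map_refl] at hsort
  rw [labelAlternation, hsort, labelAlternation]
  exact alternation_congr (fun j hj => by rw [h j ((Finset.mem_sort _).1 hj)]) b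

lemma labelAlternation_not (ℓ : α → κ × Bool) (b : Bool) (J : Finset α) :
    labelAlternation (fun j => ((ℓ j).1, !(ℓ j).2)) b J = labelAlternation ℓ (!b) J :=
  alternation_not _ b _

lemma sum_labelAlternation_erase (ℓ : α → κ × Bool) (b : Bool) (J : Finset α) :
    ∑ j ∈ J, labelAlternation ℓ b (J.erase j) =
      labelAlternation ℓ b J + labelAlternation ℓ (!b) J := by
  have sort_erase (j : α) : (J.erase j).sort (labelLE ℓ) = (J.sort (labelLE ℓ)).erase j := by
    refine List.Perm.eq_of_pairwise' (Finset.pairwise_sort _ _)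
      ((Finset.pairwise_sort _ _).sublist List.erase_sublist) ?_
    rw [← Multiset.coe_eq_coe, ← Multiset.coe_erase, Finset.sort_eq, Finset.sort_eq,
      Finset.erase_val]
  simp only [labelAlternation, sort_erase]
  rw [← sum_alternation_erase _ (J.sort_nodup _), ← List.sum_toFinset _ (J.sort_nodup _),
    Finset.sort_toFinset]

lemma card_le_of_labelAlternation_ne_zero {ℓ : α → κ × Bool} {b : Bool} {J : Finset α}
    {T : Finset κ} (hT : ∀ j ∈ J, (ℓ j).1 ∈ T)
    (hℓ : ∀ i ∈ J, ∀ j ∈ J, (ℓ i).1 = (ℓ j).1 → (ℓ i).2 = (ℓ j).2)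
    (h : labelAlternation ℓ b J ≠ 0) : J.card ≤ T.card := by
  have lt_chain : (J.sort (labelLE ℓ)).IsChain fun i j => (ℓ i).1 < (ℓ j).1 := by
    have signs := isChain_of_alternation_ne_zero h
    have order := (J.pairwise_sort (labelLE ℓ)).isChain
    rw [List.isChain_iff_getElem] at signs order ⊢
    intro k hk
    have mem (k) (hk : k < (J.sort (labelLE ℓ)).length) : (J.sort (labelLE ℓ))[k] ∈ J :=
      (Finset.mem_sort _).1 (List.getElem_mem hk)
    exact (Prod.Lex.monotone_fst _ _ (order k hk)).lt_of_ne
      fun e => signs k hk (hℓ _ (mem _ _) _ (mem _ _) e)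
  have nodup : ((J.sort (labelLE ℓ)).map fun j => (ℓ j).1).Nodup :=
    ((List.isChain_map _).2 lt_chain).pairwise.imp ne_of_lt
  rw [← Finset.length_sort (labelLE ℓ), ← List.length_map fun j => (ℓ j).1,
    ← List.toFinset_card_of_nodup nodup]
  refine Finset.card_le_card fun x hx => ?_
  obtain ⟨j, hj, rfl⟩ := List.mem_map.1 (List.mem_toFinset.1 hx)
  exact hT j ((Finset.mem_sort _).1 hj)

end Alternation

section Tucker

variable {n : ℕ}

/-- A signed set assigns to each sign a finite set, the two sets being disjoint and not both empty;
these are the nonzero vectors of `{0, +, -}ⁿ`. -/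
def IsSignedSet (X : Bool → Finset (Fin n)) : Prop :=
  Disjoint (X true) (X false) ∧ ∃ b, (X b).Nonempty

lemma IsSignedSet.disjoint {X : Bool → Finset (Fin n)} (hX : IsSignedSet X) (b : Bool) :
    Disjoint (X b) (X !b) := by
  cases b
  exacts [hX.1.symm, hX.1]

/-- A permutation listing `Fin n` (it maps each element to its position) and a choice of signs.
These index the maximal chains of signed sets. -/
abbrev SignedPerm (n : ℕ) : Type := Equiv.Perm (Fin n) × (Fin n → Bool)

namespace SignedPerm

/-- The `j`-th member of the chain of signed sets of `p`; it has `j + 1` elements. -/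
def flag (p : SignedPerm n) (j : ℕ) (b : Bool) : Finset (Fin n) :=
  {a | (p.1 a : ℕ) ≤ j ∧ p.2 a = b}

lemma isSignedSet_flag (p : SignedPerm n) {j : ℕ} (hj : j < n) : IsSignedSet (p.flag j) := by
  refine ⟨Finset.disjoint_filter.2 fun a _ h h' => by simp [h.2] at h',
    p.2 (p.1.symm ⟨j, hj⟩), p.1.symm ⟨j, hj⟩, ?_⟩
  simp [flag]

lemma flag_mono (p : SignedPerm n) : Monotone p.flag := fun _ _ hij _ =>
  Finset.monotone_filter_right _ fun _ _ h => ⟨h.1.trans hij, h.2⟩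

/-- The signed permutations that move no element from `i` on and give those elements the sign
`true`. Their initial flags triangulate the sphere of dimension `i - 1`. -/
def sphere (n i : ℕ) : Finset (SignedPerm n) :=
  {p | ∀ a : Fin n, i ≤ a → p.1 a = a ∧ p.2 a = true}

lemma mem_sphere {i : ℕ} {p : SignedPerm n} :
    p ∈ sphere n i ↔ ∀ a : Fin n, i ≤ a → p.1 a = a ∧ p.2 a = true := by
  simp [sphere]

/-- The half of `sphere n (i + 1)` on which the sign of `i` is `true`. -/
noncomputable def hemisphere (i : Fin n) : Finset (SignedPerm n) :=
  {p ∈ sphere n (i + 1) | p.2 i = true}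

/-- Reverse the signs of the elements of `s`. -/
noncomputable def flip (s : Set (Fin n)) (p : SignedPerm n) : SignedPerm n :=
  (p.1, fun a => if a ∈ s then !p.2 a else p.2 a)

lemma flip_snd_of_mem {s : Set (Fin n)} (p : SignedPerm n) {a : Fin n} (ha : a ∈ s) :
    (flip s p).2 a = !p.2 a :=
  if_pos ha

lemma flip_snd_of_notMem {s : Set (Fin n)} (p : SignedPerm n) {a : Fin n} (ha : a ∉ s) :
    (flip s p).2 a = p.2 a :=
  if_neg ha

lemma flip_flip (s : Set (Fin n)) (p : SignedPerm n) : flip s (flip s p) = p := by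
  refine Prod.ext rfl (funext fun a => ?_)
  by_cases ha : a ∈ s <;> simp [flip, ha]

lemma flag_flip_of_disjoint {s : Set (Fin n)} {p : SignedPerm n} {j : ℕ}
    (h : ∀ a ∈ s, j < p.1 a) : (flip s p).flag j = p.flag j := by
  funext b
  refine Finset.filter_congr fun a _ => and_congr_right fun ha => ?_
  rw [flip_snd_of_notMem p fun has => (h a has).not_ge ha]

lemma flag_flip_of_subset {s : Set (Fin n)} {p : SignedPerm n} {j : ℕ}
    (h : ∀ a, p.1 a ≤ j → a ∈ s) : (flip s p).flag j = p.flag j ∘ not := by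
  funext b
  refine Finset.filter_congr fun a _ => and_congr_right fun ha => ?_
  rw [flip_snd_of_mem p (h a ha), Bool.not_eq_eq_eq_not]

/-- Exchange the elements in positions `i` and `j`. -/
def swap (i j : Fin n) (p : SignedPerm n) : SignedPerm n :=
  (Equiv.swap i j * p.1, p.2)

lemma swap_swap (i j : Fin n) (p : SignedPerm n) : swap i j (swap i j p) = p := by
  simp [swap, ← mul_assoc]

lemma flag_swap {i k : Fin n} (hik : (k : ℕ) = i + 1) (p : SignedPerm n) {j : ℕ} (hj : j ≠ i) :
    (swap i k p).flag j = p.flag j := by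
  funext b
  refine Finset.filter_congr fun a _ => and_congr_left fun _ => ?_
  rw [swap, Equiv.Perm.mul_apply, Equiv.swap_apply_def]
  split_ifs with h h <;> simp only [h] <;> omega

lemma val_lt_of_mem_sphere {i : ℕ} {p : SignedPerm n} (hp : p ∈ sphere n i) {a : Fin n}
    (ha : p.1 a < i) : a < i := by
  by_contra! h
  rw [(mem_sphere.1 hp a h).1] at ha
  omega

variable {κ : Type*} [LinearOrder κ] (lam : (Bool → Finset (Fin n)) → κ × Bool)

/-- The indicator, in `ZMod 2`, of the labels of the members `J` of the chain of `p` alternating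
in sign, starting with `b`. -/
noncomputable def flagAlternation (b : Bool) (J : Finset ℕ) (p : SignedPerm n) : ZMod 2 :=
  labelAlternation (fun j => lam (p.flag j)) b J

variable {lam}

lemma flagAlternation_congr {J : Finset ℕ} {p q : SignedPerm n}
    (h : ∀ j ∈ J, p.flag j = q.flag j) (b : Bool) :
    flagAlternation lam b J p = flagAlternation lam b J q :=
  labelAlternation_congr (fun j hj => by rw [h j hj]) b

lemma sum_hemisphere_erase_eq_zero (b : Bool) {i : Fin n} {r : ℕ} (hr : r < i) :
    ∑ p ∈ hemisphere i, flagAlternation lam b ((Finset.range (i + 1)).erase r) p = 0 := by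
  let r₀ : Fin n := ⟨r, by omega⟩
  let r₁ : Fin n := ⟨r + 1, by omega⟩
  have flag_eq (p : SignedPerm n) (j) (hj : j ∈ (Finset.range (i + 1)).erase r) :
      p.flag j = (swap r₀ r₁ p).flag j :=
    (flag_swap rfl p (Finset.ne_of_mem_erase hj)).symm
  refine Finset.sum_involution (fun p _ => swap r₀ r₁ p) (fun p _ => ?_) (fun p _ _ h => ?_)
    (fun p hp => ?_) fun p _ => swap_swap _ _ p
  · rw [← flagAlternation_congr (flag_eq p), CharTwo.add_self_eq_zero]
  · have : Equiv.swap r₀ r₁ = 1 := mul_eq_right.1 (congrArg Prod.fst h)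
    simpa [r₀, r₁] using Equiv.swap_eq_one_iff.1 this
  · simp only [hemisphere, Finset.mem_filter, mem_sphere] at hp ⊢
    refine ⟨fun a ha => ⟨?_, (hp.1 a ha).2⟩, hp.2⟩
    rw [swap, Equiv.Perm.mul_apply, (hp.1 a ha).1]
    exact Equiv.swap_apply_of_ne_of_ne (by rw [Ne, Fin.ext_iff]; dsimp only [r₀]; omega)
      (by rw [Ne, Fin.ext_iff]; dsimp only [r₁]; omega)

lemma sum_hemisphere_range (b : Bool) (i : Fin n) :
    ∑ p ∈ hemisphere i, flagAlternation lam b (Finset.range i) p =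
      ∑ p ∈ sphere n i, flagAlternation lam b (Finset.range i) p := by
  have hsphere : (hemisphere i).filter (fun p => p.1 i = i) = sphere n i := by
    ext p
    simp only [hemisphere, Finset.mem_filter, mem_sphere]
    refine ⟨fun h a ha => ?_, fun h => ⟨⟨fun a ha => h a (by omega), (h i le_rfl).2⟩,
      (h i le_rfl).1⟩⟩
    obtain hai | rfl := ha.lt_or_eq.imp_right Fin.ext
    exacts [h.1.1 a hai, ⟨h.2, h.1.2⟩]
  have hrest : ∑ p ∈ hemisphere i with p.1 i ≠ i, flagAlternation lam b (Finset.range i) p = 0 := by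
    refine Finset.sum_involution (fun p _ => flip {p.1.symm i} p) (fun p _ => ?_)
      (fun p _ _ h => ?_) (fun p hp => ?_) fun p _ => flip_flip _ p
    · rw [flagAlternation_congr fun j hj => flag_flip_of_disjoint (by simpa using hj),
        CharTwo.add_self_eq_zero]
    · simpa [flip] using congrFun (congrArg Prod.snd h) (p.1.symm i)
    · simp only [hemisphere, Finset.mem_filter, mem_sphere] at hp ⊢
      have sign_eq {a : Fin n} (ha : p.1 a ≠ i) : (flip {p.1.symm i} p).2 a = p.2 a :=
        flip_snd_of_notMem p fun h => ha (p.1.eq_symm_apply.1 h)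
      refine ⟨⟨fun a ha => ⟨(hp.1.1 a ha).1, ?_⟩, ?_⟩, hp.2⟩
      · rw [sign_eq (by rw [(hp.1.1 a ha).1]; rintro rfl; omega), (hp.1.1 a ha).2]
      · rw [sign_eq hp.2, hp.1.2]
  rw [← Finset.sum_filter_add_sum_filter_not (hemisphere i) (fun p => p.1 i = i), hsphere, hrest,
    add_zero]

variable (lam_not : ∀ X, IsSignedSet X → lam (X ∘ not) = ((lam X).1, !(lam X).2))
include lam_not

lemma sum_sphere_succ (b : Bool) (i : Fin n) :
    ∑ p ∈ sphere n (i + 1), flagAlternation lam b (Finset.range (i + 1)) p =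
      ∑ p ∈ hemisphere i, (flagAlternation lam b (Finset.range (i + 1)) p +
        flagAlternation lam (!b) (Finset.range (i + 1)) p) := by
  rw [Finset.sum_add_distrib,
    ← Finset.sum_filter_add_sum_filter_not (sphere n (i + 1)) (fun p => p.2 i = true)]
  congr 1
  have flip_mem (p) (hp : p ∈ sphere n (i + 1)) : flip (Set.Iic i) p ∈ sphere n (i + 1) := by
    refine mem_sphere.2 fun a ha => ⟨(mem_sphere.1 hp a ha).1, ?_⟩
    rw [flip_snd_of_notMem p (Set.notMem_Iic.2 (Fin.lt_def.2 ha)), (mem_sphere.1 hp a ha).2]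
  have flip_sign (p : SignedPerm n) : (flip (Set.Iic i) p).2 i = !p.2 i :=
    flip_snd_of_mem p Set.self_mem_Iic
  refine Finset.sum_nbij' (flip (Set.Iic i)) (flip (Set.Iic i)) (fun p hp => ?_) (fun p hp => ?_)
    (fun p _ => flip_flip _ p) (fun p _ => flip_flip _ p) fun p hp => ?_
  · rw [Finset.mem_filter] at hp
    exact Finset.mem_filter.2 ⟨flip_mem p hp.1, by simpa [flip_sign] using hp.2⟩
  · rw [hemisphere, Finset.mem_filter] at hp
    exact Finset.mem_filter.2 ⟨flip_mem p hp.1, by simpa [flip_sign] using hp.2⟩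
  · rw [flagAlternation, flagAlternation, ← labelAlternation_not]
    refine labelAlternation_congr (fun j hj => ?_) b
    rw [Finset.mem_range] at hj
    rw [flag_flip_of_subset fun a ha => ?_, lam_not _ (p.isSignedSet_flag (by omega)),
      Bool.not_not]
    have := val_lt_of_mem_sphere (Finset.mem_filter.1 hp).1 (a := a) (by omega)
    exact Fin.le_def.2 (by omega)

/-- An alternating sequence of labels is found by counting mod 2. The antipodal map turns the sum
over a sphere into a sum over the facets of a hemisphere, and then over their ridges. A ridge inside
the hemisphere lies in two facets and cancels, which leaves the equator, a sphere of lower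
dimension. -/
lemma sum_sphere_flagAlternation (b : Bool) {i : ℕ} (hi : i ≤ n) :
    ∑ p ∈ sphere n i, flagAlternation lam b (Finset.range i) p = 1 := by
  induction i with
  | zero =>
    have : sphere n 0 = {(1, fun _ => true)} := by
      ext p
      simp [mem_sphere, Prod.ext_iff, Equiv.ext_iff, funext_iff, forall_and]
    rw [this, Finset.sum_singleton]
    simp [flagAlternation, labelAlternation, alternation]
  | succ i ih =>
    let i' : Fin n := ⟨i, hi⟩
    calc ∑ p ∈ sphere n (i + 1), flagAlternation lam b (Finset.range (i + 1)) p
        = ∑ p ∈ hemisphere i', (flagAlternation lam b (Finset.range (i + 1)) p +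
            flagAlternation lam (!b) (Finset.range (i + 1)) p) := sum_sphere_succ lam_not b i'
      _ = ∑ p ∈ hemisphere i', ∑ r ∈ Finset.range (i + 1),
            flagAlternation lam b ((Finset.range (i + 1)).erase r) p :=
          Finset.sum_congr rfl fun p _ => (sum_labelAlternation_erase _ b _).symm
      _ = ∑ p ∈ hemisphere i', flagAlternation lam b (Finset.range i) p := by
          rw [Finset.sum_comm, Finset.sum_range_succ, Finset.sum_eq_zero, zero_add,
            Finset.range_add_one, Finset.erase_insert Finset.notMem_range_self]
          exact fun r hr => sum_hemisphere_erase_eq_zero b (i := i') (Finset.mem_range.1 hr)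
      _ = ∑ p ∈ sphere n i, flagAlternation lam b (Finset.range i) p :=
          sum_hemisphere_range b i'
      _ = 1 := ih (by omega)

end SignedPerm

theorem tucker_exists_complementary_pair {κ : Type*} [LinearOrder κ]
    {lam : (Bool → Finset (Fin n)) → κ × Bool} {T : Finset κ} (hT : T.card < n)
    (lam_mem : ∀ X, IsSignedSet X → (lam X).1 ∈ T)
    (lam_not : ∀ X, IsSignedSet X → lam (X ∘ not) = ((lam X).1, !(lam X).2)) :
    ∃ X Y, IsSignedSet X ∧ IsSignedSet Y ∧ X ≤ Y ∧
      (lam X).1 = (lam Y).1 ∧ (lam X).2 ≠ (lam Y).2 := by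
  by_contra! no_pair
  obtain ⟨p, -, hp⟩ := Finset.exists_ne_zero_of_sum_ne_zero
    ((SignedPerm.sum_sphere_flagAlternation lam_not true le_rfl).trans_ne one_ne_zero)
  refine hT.not_ge ((Finset.card_range n).symm.trans_le
    (card_le_of_labelAlternation_ne_zero (fun j hj => ?_) (fun i hi j hj h => ?_) hp))
  · exact lam_mem _ (p.isSignedSet_flag (Finset.mem_range.1 hj))
  · have hi' := p.isSignedSet_flag (Finset.mem_range.1 hi)
    have hj' := p.isSignedSet_flag (Finset.mem_range.1 hj)
    obtain hij | hji := le_total i j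
    · exact no_pair _ _ hi' hj' (p.flag_mono hij) h
    · exact (no_pair _ _ hj' hi' (p.flag_mono hji) h.symm).symm

end Tucker

section Schrijver

variable {n m k : ℕ}

/-- The length of a longest alternating sequence of elements less than `i` in the signed set `X`
whose top element has sign `b`. -/
noncomputable def altLength (X : Bool → Finset (Fin n)) : Bool → ℕ → ℕ
  | _, 0 => 0
  | b, i + 1 => if ∃ a ∈ X b, (a : ℕ) = i then altLength X (!b) i + 1 else altLength X b i

lemma altLength_comp_not (X : Bool → Finset (Fin n)) (b : Bool) (i : ℕ) :
    altLength (X ∘ not) b i = altLength X (!b) i := by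
  induction i generalizing b with
  | zero => rfl
  | succ i ih => simp only [altLength, ih, Function.comp_apply]

lemma IsSignedSet.not_exists_mem_not {X : Bool → Finset (Fin n)} (hX : IsSignedSet X) {b : Bool}
    {i : ℕ} : (∃ a ∈ X b, (a : ℕ) = i) → ¬ ∃ a ∈ X (!b), (a : ℕ) = i := by
  rintro ⟨a, ha, rfl⟩ ⟨a', ha', h⟩
  exact Finset.disjoint_left.1 (hX.disjoint b) ha (Fin.ext h ▸ ha')

lemma IsSignedSet.altLength_le {X : Bool → Finset (Fin n)} (hX : IsSignedSet X) (b : Bool)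
    (i : ℕ) : altLength X b i ≤ altLength X (!b) i + 1 := by
  induction i generalizing b with
  | zero => exact Nat.zero_le _
  | succ i ih =>
    have hb := ih b
    have hb' := ih !b
    have := hX.not_exists_mem_not (b := b) (i := i)
    simp only [altLength, Bool.not_not] at hb' ⊢
    split_ifs <;> omega

lemma IsSignedSet.altLength_mono {X Y : Bool → Finset (Fin n)} (hY : IsSignedSet Y) (h : X ≤ Y)
    (b : Bool) (i : ℕ) : altLength X b i ≤ altLength Y b i := by
  induction i generalizing b with
  | zero => exact Nat.zero_le _
  | succ i ih =>
    have hb := ih b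
    have hb' := ih !b
    have := hY.altLength_le b i
    have hXY : (∃ a ∈ X b, (a : ℕ) = i) → ∃ a ∈ Y b, (a : ℕ) = i :=
      Exists.imp fun a => .imp_left (h b ·)
    simp only [altLength]
    split_ifs with hX hY' hY'
    · omega
    · exact absurd (hXY hX) hY'
    · omega
    · omega

lemma IsSignedSet.altLength_ne {X : Bool → Finset (Fin n)} (hX : IsSignedSet X) {i : ℕ} {c : Bool}
    {a : Fin n} (ha : a ∈ X c) (hai : a < i) (b : Bool) :
    altLength X b i ≠ altLength X (!b) i := by
  induction i with
  | zero => omega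
  | succ i ih =>
    have hd := hX.not_exists_mem_not (b := b) (i := i)
    simp only [altLength, Bool.not_not]
    split_ifs with hb hb' hb'
    · exact absurd hb' (hd hb)
    · omega
    · omega
    · refine ih ((Nat.lt_succ_iff.1 hai).lt_of_ne fun h => ?_)
      obtain rfl | rfl := Bool.eq_or_eq_not c b
      exacts [hb ⟨a, ha, h⟩, hb' ⟨a, ha, h⟩]

/-- A set without two consecutive elements; unlike in Schrijver's definition, the first and the
last element are not regarded as consecutive. -/
def IsStable (s : Finset (Fin n)) : Prop :=
  ∀ x ∈ s, ∀ y ∈ s, (x : ℕ) + 1 ≠ y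

lemma IsStable.mono {s t : Finset (Fin n)} (ht : IsStable t) (h : s ⊆ t) : IsStable s :=
  fun x hx y hy => ht x (h hx) y (h hy)

lemma IsStable.insert {s : Finset (Fin n)} (hs : IsStable s) {a : Fin n}
    (ha : ∀ x ∈ s, (x : ℕ) + 1 < a) : IsStable (insert a s) := by
  intro x hx y hy
  rw [Finset.mem_insert] at hx hy
  rcases hx with rfl | hx <;> rcases hy with rfl | hy
  · omega
  · have := ha y hy; omega
  · exact (ha x hx).ne
  · exact hs x hx y hy

lemma exists_isStable_of_altLength (X : Bool → Finset (Fin n)) (b : Bool) (i : ℕ) :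
    ∃ s ⊆ X b, ∃ t ⊆ X (!b), IsStable s ∧ IsStable t ∧
      (∀ x ∈ s, (x : ℕ) < i) ∧ (∀ x ∈ t, (x : ℕ) + 1 < i) ∧
      s.card = (altLength X b i + 1) / 2 ∧ t.card = altLength X b i / 2 := by
  induction i generalizing b with
  | zero => exact ⟨∅, by simp, ∅, by simp, by simp [IsStable, altLength]⟩
  | succ i ih =>
    by_cases h : ∃ a ∈ X b, (a : ℕ) = i
    · obtain ⟨t, ht, s, hs, stable_t, stable_s, lt_t, lt_s, card_t, card_s⟩ := ih !b
      obtain ⟨a, ha, rfl⟩ := h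
      rw [Bool.not_not] at hs
      have ha_s : a ∉ s := fun has => by have := lt_s a has; omega
      refine ⟨insert a s, Finset.insert_subset ha hs, t, ht, stable_s.insert lt_s, stable_t,
        fun x hx => ?_, fun x hx => by have := lt_t x hx; omega, ?_, ?_⟩
      · obtain rfl | hx := Finset.mem_insert.1 hx
        · omega
        · have := lt_s x hx; omega
      · rw [Finset.card_insert_of_notMem ha_s, card_s, altLength, if_pos ⟨a, ha, rfl⟩]; omega
      · rw [card_t, altLength, if_pos ⟨a, ha, rfl⟩]
    · obtain ⟨s, hs, t, ht, stable_s, stable_t, lt_s, lt_t, hcard⟩ := ih b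
      rw [altLength, if_neg h]
      exact ⟨s, hs, t, ht, stable_s, stable_t, fun x hx => (lt_s x hx).trans i.lt_succ_self,
        fun x hx => (lt_t x hx).trans i.lt_succ_self, hcard⟩

/-- The stable `m`-element subsets of `Fin n`, as vertices of the Kneser graph. -/
abbrev StableSet (n m : ℕ) : Type :=
  {s : {s : Finset (Fin n) // s.card = m} // IsStable s.1}

/-- The Kneser graph restricted to the stable sets. -/
def schrijverGraph (n m : ℕ) : SimpleGraph (StableSet n m) :=
  (kneser n m).comap Subtype.val

lemma kneser_adj {s t : {s : Finset (Fin n) // s.card = m}} :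
    (kneser n m).Adj s t ↔ s ≠ t ∧ Disjoint s.1 t.1 := by
  rw [kneser, SimpleGraph.fromRel_adj, disjoint_comm (a := t.1), or_self]

lemma kneser_adj_iff_disjoint (hm : 0 < m) {s t : {s : Finset (Fin n) // s.card = m}} :
    (kneser n m).Adj s t ↔ Disjoint s.1 t.1 := by
  rw [kneser_adj, and_iff_right_iff_imp]
  rintro hst rfl
  have := s.2
  rw [disjoint_self.1 hst] at this
  exact hm.ne this

section Label

variable (c : (schrijverGraph n m).Coloring (Fin k)) (X : Bool → Finset (Fin n))

/-- The colors of the stable `m`-sets contained in the positive or negative part of `X`. -/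
def stableColors (b : Bool) : Set ℕ :=
  {v | ∃ s, s.1.1 ⊆ X b ∧ (c s : ℕ) = v}

/-- The length of a longest alternating sequence in the signed set `X`. -/
noncomputable def altMax : ℕ := max (altLength X true n) (altLength X false n)

/-- The labeling to which Tucker's lemma is applied. Short signed sets are labeled by their
alternation length, long ones by the least color of a stable set in one of their two parts. -/
noncomputable def schrijverLabel : ℕ × Bool :=
  if altMax X < 2 * m then
    (altMax X, decide (altLength X false n < altLength X true n))
  else
    (2 * m + min (sInf (stableColors c X true)) (sInf (stableColors c X false)),
      decide (sInf (stableColors c X true) < sInf (stableColors c X false)))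

end Label

variable (c : (schrijverGraph n m).Coloring (Fin k)) {X Y : Bool → Finset (Fin n)}

lemma stableColors_mono (h : X ≤ Y) (b : Bool) : stableColors c X b ⊆ stableColors c Y b :=
  fun _ ⟨s, hs, hv⟩ => ⟨s, hs.trans (h b), hv⟩

lemma IsSignedSet.disjoint_stableColors (hX : IsSignedSet X) (hm : 0 < m) :
    Disjoint (stableColors c X true) (stableColors c X false) := by
  rw [Set.disjoint_left]
  rintro _ ⟨s, hs, rfl⟩ ⟨t, ht, hst⟩
  have : (schrijverGraph n m).Adj t s :=
    (kneser_adj_iff_disjoint hm).2 (hX.1.symm.mono ht hs)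
  exact c.valid this (Fin.ext hst)

lemma stableColors_nonempty (h : 2 * m ≤ altMax X) (b : Bool) :
    (stableColors c X b).Nonempty := by
  have of_subset {b : Bool} {s : Finset (Fin n)} (hs : s ⊆ X b) (stable : IsStable s)
      (hcard : m ≤ s.card) : (stableColors c X b).Nonempty := by
    obtain ⟨t, hts, ht⟩ := Finset.exists_subset_card_eq hcard
    exact ⟨_, ⟨⟨t, ht⟩, stable.mono hts⟩, hts.trans hs, rfl⟩
  obtain ⟨b', hb'⟩ : ∃ b', 2 * m ≤ altLength X b' n :=
    (le_max_iff.1 h).elim (⟨true, ·⟩) (⟨false, ·⟩)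
  obtain ⟨s, hs, t, ht, stable_s, stable_t, -, -, card_s, card_t⟩ :=
    exists_isStable_of_altLength X b' n
  obtain rfl | rfl := Bool.eq_or_eq_not b b'
  · exact of_subset hs stable_s (by omega)
  · exact of_subset ht stable_t (by omega)

lemma IsSignedSet.altLength_true_ne_false (hX : IsSignedSet X) :
    altLength X true n ≠ altLength X false n := by
  obtain ⟨b, a, ha⟩ := hX.2
  exact hX.altLength_ne ha a.2 true

lemma IsSignedSet.sInf_stableColors_ne (hX : IsSignedSet X) (hm : 0 < m) (h : 2 * m ≤ altMax X) :
    sInf (stableColors c X true) ≠ sInf (stableColors c X false) :=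
  (hX.disjoint_stableColors c hm).ne_of_mem (Nat.sInf_mem (stableColors_nonempty c h true))
    (Nat.sInf_mem (stableColors_nonempty c h false))

lemma IsSignedSet.schrijverLabel_fst_mem (hX : IsSignedSet X) (hm : 0 < m) :
    (schrijverLabel c X).1 ∈ Finset.Ico 1 (2 * m + k) := by
  rw [Finset.mem_Ico, schrijverLabel]
  split_ifs with h
  · have := hX.altLength_true_ne_false
    simp only [altMax] at h ⊢
    omega
  · obtain ⟨s, -, hs⟩ := Nat.sInf_mem (stableColors_nonempty c (not_lt.1 h) true)
    have := (c s).2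
    dsimp only
    omega

lemma IsSignedSet.schrijverLabel_comp_not (hX : IsSignedSet X) (hm : 0 < m) :
    schrijverLabel c (X ∘ not) = ((schrijverLabel c X).1, !(schrijverLabel c X).2) := by
  have hmax : altMax (X ∘ not) = altMax X := by
    simp only [altMax, altLength_comp_not, Bool.not_true, Bool.not_false, max_comm]
  have hcolors (b : Bool) : stableColors c (X ∘ not) b = stableColors c X !b := rfl
  simp only [schrijverLabel, hmax, hcolors, altLength_comp_not, Bool.not_true, Bool.not_false]
  split_ifs with h
  · have := hX.altLength_true_ne_false
    refine Prod.ext rfl ?_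
    rw [← decide_not, decide_eq_decide]
    omega
  · have := hX.sInf_stableColors_ne c hm (not_lt.1 h)
    refine Prod.ext (congrArg (2 * m + ·) (min_comm _ _)) ?_
    rw [← decide_not, decide_eq_decide]
    omega

lemma IsSignedSet.schrijverLabel_snd_eq (hX : IsSignedSet X) (hY : IsSignedSet Y) (hm : 0 < m)
    (hXY : X ≤ Y) (h : (schrijverLabel c X).1 = (schrijverLabel c Y).1) :
    (schrijverLabel c X).2 = (schrijverLabel c Y).2 := by
  have hlt : altMax X < 2 * m ↔ altMax Y < 2 * m := by
    simp only [schrijverLabel] at h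
    split_ifs at h <;> omega
  by_cases hYm : altMax Y < 2 * m
  · simp only [schrijverLabel, if_pos hYm, if_pos (hlt.2 hYm), decide_eq_decide] at h ⊢
    rw [altMax, altMax] at h
    have := hX.altLength_true_ne_false
    have := hY.altLength_true_ne_false
    have := hY.altLength_mono hXY true n
    have := hY.altLength_mono hXY false n
    omega
  · have hXm := mt hlt.1 hYm
    simp only [schrijverLabel, if_neg hYm, if_neg hXm, decide_eq_decide] at h ⊢
    have ne_of_colors (b b' : Bool) (hb : b ≠ b') :
        sInf (stableColors c X b) ≠ sInf (stableColors c Y b') := by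
      have hX_mem := stableColors_mono c hXY b
        (Nat.sInf_mem (stableColors_nonempty c (not_lt.1 hXm) b))
      have hY_mem := Nat.sInf_mem (stableColors_nonempty c (not_lt.1 hYm) b')
      have hd := hY.disjoint_stableColors c hm
      cases b <;> cases b' <;> try contradiction
      exacts [hd.symm.ne_of_mem hX_mem hY_mem, hd.ne_of_mem hX_mem hY_mem]
    have := ne_of_colors true false (by decide)
    have := ne_of_colors false true (by decide)
    omega

theorem schrijverGraph_not_colorable (hm : 0 < m) (k : ℕ) :
    ¬ (schrijverGraph (2 * m + k) m).Colorable k := by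
  rintro ⟨c⟩
  obtain ⟨X, Y, hX, hY, hXY, hfst, hsnd⟩ := tucker_exists_complementary_pair
    (lam := schrijverLabel c) (T := Finset.Ico 1 (2 * m + k)) (by rw [Nat.card_Ico]; omega)
    (fun _ hX => hX.schrijverLabel_fst_mem c hm) (fun _ hX => hX.schrijverLabel_comp_not c hm)
  exact hsnd (hX.schrijverLabel_snd_eq c hY hm hXY hfst)

end Schrijver

section CountStable

open Finset

variable {n : ℕ}

/-- The elements outside `s` that are not the successor of an element of `s`. A stable set is
determined by its gaps, and a large stable set has few of them. -/
def gaps (s : Finset (Fin n)) : Finset (Fin n) :=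
  {a | a ∉ s ∧ ∀ x ∈ s, (x : ℕ) + 1 ≠ a}

lemma mem_gaps {s : Finset (Fin n)} {a : Fin n} :
    a ∈ gaps s ↔ a ∉ s ∧ ∀ x ∈ s, (x : ℕ) + 1 ≠ a := by
  simp [gaps]

lemma IsStable.mem_iff {s : Finset (Fin n)} (hs : IsStable s) {a : Fin n} :
    a ∈ s ↔ a ∉ gaps s ∧ ∀ x ∈ s, (x : ℕ) + 1 ≠ a := by
  rw [mem_gaps]
  exact ⟨fun ha => ⟨fun h => h.1 ha, fun x hx => hs x hx a ha⟩, by tauto⟩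

lemma injOn_gaps : Set.InjOn (gaps (n := n)) {s | IsStable s} := by
  intro s hs t ht hst
  have mem_iff (i : ℕ) : ∀ a : Fin n, (a : ℕ) = i → (a ∈ s ↔ a ∈ t) := by
    induction i using Nat.strong_induction_on with
    | _ i ih =>
      rintro a rfl
      rw [IsStable.mem_iff hs, IsStable.mem_iff ht, hst]
      refine and_congr_right fun _ => forall_congr' fun x => ?_
      by_cases hx : (x : ℕ) + 1 = a
      · rw [ih x (by omega) x rfl]
      · simp [hx]
  exact ext fun a => mem_iff a a rfl

lemma IsStable.two_mul_card_add_card_gaps_le {s : Finset (Fin n)} (hs : IsStable s) :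
    2 * s.card + (gaps s).card ≤ n + 1 := by
  let same := s.map Fin.castSuccEmb
  let next := s.map (Fin.succEmb n)
  let gap := (gaps s).map Fin.castSuccEmb
  have disj_next : Disjoint same next := by
    simp only [same, next, disjoint_left, mem_map, not_exists, not_and]
    rintro _ ⟨x, hx, rfl⟩ y hy h
    exact hs y hy x hx (by simpa using congrArg Fin.val h)
  have disj_gap : Disjoint (same ∪ next) gap := by
    simp only [same, next, gap, disjoint_right, mem_map, mem_union, mem_gaps]
    rintro _ ⟨a, ⟨ha, ha'⟩, rfl⟩ (⟨x, hx, h⟩ | ⟨x, hx, h⟩)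
    · exact ha (Fin.castSuccEmb.injective h ▸ hx)
    · exact ha' x hx (by simpa using congrArg Fin.val h)
  calc 2 * s.card + (gaps s).card = ((same ∪ next) ∪ gap).card := by
        rw [card_union_of_disjoint disj_gap, card_union_of_disjoint disj_next]
        simp only [same, next, gap, card_map]
        omega
    _ ≤ n + 1 := (card_le_univ _).trans_eq (Fintype.card_fin _)

lemma card_filter_card_le (α : Type*) [Fintype α] (r : ℕ) :
    #{s : Finset α | #s ≤ r} ≤ (Fintype.card α + 1) ^ r := by
  have hsub : univ.filter (fun s : Finset α => #s ≤ r) ⊆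
      (range (r + 1)).biUnion fun i => powersetCard i univ := fun s hs => by
    simpa [Nat.lt_succ_iff] using hs
  calc #{s : Finset α | #s ≤ r}
      ≤ ∑ i ∈ range (r + 1), (Fintype.card α).choose i := by
        refine (card_le_card hsub).trans (card_biUnion_le.trans_eq ?_)
        simp only [card_powersetCard, card_univ]
    _ ≤ ∑ i ∈ range (r + 1), Fintype.card α ^ i * 1 ^ (r - i) * r.choose i := by
        refine sum_le_sum fun i hi => (Nat.choose_le_pow _ _).trans ?_
        rw [one_pow, mul_one]
        exact Nat.le_mul_of_pos_right _ (Nat.choose_pos (Nat.lt_succ_iff.1 (mem_range.1 hi)))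
    _ = (Fintype.card α + 1) ^ r := (add_pow _ _ _).symm

lemma card_stableSet_le (m k : ℕ) :
    Fintype.card (StableSet (2 * m + k) m) ≤ (2 * m + k + 1) ^ (k + 1) := by
  have hgaps (s : StableSet (2 * m + k) m) : #(gaps s.1.1) ≤ k + 1 := by
    have := s.2.two_mul_card_add_card_gaps_le
    have := s.1.2
    omega
  calc Fintype.card (StableSet (2 * m + k) m)
      ≤ #{s : Finset (Fin (2 * m + k)) | #s ≤ k + 1} := by
        rw [← card_univ]
        exact card_le_card_of_injOn (fun s => gaps s.1.1) (fun s _ => by simpa using hgaps s)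
          fun s _ t _ h => Subtype.ext (Subtype.ext (injOn_gaps s.2 t.2 h))
    _ ≤ (2 * m + k + 1) ^ (k + 1) := by
        simpa using card_filter_card_le (Fin (2 * m + k)) (k + 1)

end CountStable

section Averaging

open Finset

lemma card_mul_card_filter_smul_mem {Γ D : Type*} [Group Γ] [Fintype Γ] [MulAction Γ D] [Fintype D]
    [MulAction.IsPretransitive Γ D] (R : Finset D) (x : D) :
    Fintype.card D * #{σ : Γ | σ • x ∈ R} = Fintype.card Γ * #R := by
  have card_eq (y : D) : #{σ : Γ | σ • y ∈ R} = #{σ : Γ | σ • x ∈ R} := by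
    obtain ⟨τ, rfl⟩ := MulAction.exists_smul_eq Γ x y
    exact card_equiv (Equiv.mulRight τ) fun σ => by simp [mul_smul]
  calc Fintype.card D * #{σ : Γ | σ • x ∈ R}
      = ∑ y : D, #{σ : Γ | σ • y ∈ R} := by simp [card_eq]
    _ = ∑ σ : Γ, #{y : D | σ • y ∈ R} := sum_card_bipartiteAbove_eq_sum_card_bipartiteBelow _
    _ = ∑ _σ : Γ, #R := sum_congr rfl fun σ _ =>
        card_bij (fun y _ => σ • y) (by simp) (by simp) fun z hz => ⟨σ⁻¹ • z, by simpa using hz⟩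
    _ = Fintype.card Γ * #R := by simp

lemma card_le_card_mul_card_of_forall_exists_smul_mem {Γ D : Type*} [Group Γ] [Finite Γ]
    [MulAction Γ D] [Fintype D] [MulAction.IsPretransitive Γ D] {F R : Finset D}
    (h : ∀ σ : Γ, ∃ x ∈ F, σ • x ∈ R) : Fintype.card D ≤ #F * #R := by
  have := Fintype.ofFinite Γ
  have hcover : (univ : Finset Γ) ⊆ F.biUnion fun x => {σ | σ • x ∈ R} := fun σ _ => by
    simpa using h σ
  refine Nat.le_of_mul_le_mul_left ?_ (Fintype.card_pos (α := Γ))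
  calc Fintype.card Γ * Fintype.card D
      ≤ (∑ x ∈ F, #{σ : Γ | σ • x ∈ R}) * Fintype.card D :=
        Nat.mul_le_mul_right _ ((card_le_card hcover).trans card_biUnion_le)
    _ = Fintype.card Γ * (#F * #R) := by
        rw [sum_mul, sum_congr rfl fun x _ =>
          (Nat.mul_comm _ _).trans (card_mul_card_filter_smul_mem R x), sum_const, smul_eq_mul,
          Nat.mul_left_comm]

variable {V W : Type*} {G : SimpleGraph V} {S : SimpleGraph W}

instance autDartAction : MulAction (G ≃g G) G.Dart where
  smul σ d := σ.toHom.mapDart d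
  one_smul _ := rfl
  mul_smul _ _ _ := rfl

lemma card_dart_le_card_sq_mul_card_monochromatic [Fintype V] [Fintype W]
    [MulAction.IsPretransitive (G ≃g G) G.Dart] (j : S →g G) {k : ℕ} (hS : ¬ S.Colorable k)
    (f : V → Fin k) :
    Fintype.card G.Dart ≤ Fintype.card W ^ 2 * #{d : G.Dart | f d.fst = f d.snd} := by
  have : Finite (G ≃g G) := .of_injective (fun σ => ⇑σ) DFunLike.coe_injective
  have hmono (σ : G ≃g G) :
      ∃ d ∈ univ.image j.mapDart, σ • d ∈ ({d | f d.fst = f d.snd} : Finset G.Dart) := by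
    by_contra! hproper
    refine hS ⟨.mk (fun w => f (σ (j w))) fun {u v} huv h => ?_⟩
    have := hproper _ (mem_image_of_mem j.mapDart (mem_univ ⟨(u, v), huv⟩))
    exact this (mem_filter.2 ⟨mem_univ _, h⟩)
  calc Fintype.card G.Dart
      ≤ #(univ.image j.mapDart) * #{d : G.Dart | f d.fst = f d.snd} :=
        card_le_card_mul_card_of_forall_exists_smul_mem hmono
    _ ≤ Fintype.card W ^ 2 * #{d : G.Dart | f d.fst = f d.snd} := by
        refine Nat.mul_le_mul_right _ (card_image_le.trans ?_)
        rw [card_univ, sq, ← Fintype.card_prod]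
        exact Fintype.card_le_of_injective _ SimpleGraph.Dart.toProd_injective

end Averaging

section KneserSymmetry

variable {n m : ℕ}

/-- The automorphism of the Kneser graph induced by a permutation of the ground set. -/
def kneserIso (m : ℕ) (σ : Equiv.Perm (Fin n)) : kneser n m ≃g kneser n m where
  toEquiv := σ.finsetCongr.subtypeEquiv fun s => by simp
  map_rel_iff' {s t} := by
    simp [kneser_adj, Subtype.ext_iff]

lemma exists_perm_map_eq {α : Type*} [Finite α] {s t s' t' : Finset α} (h : Disjoint s t)
    (h' : Disjoint s' t') (hs : s.card = s'.card) (ht : t.card = t'.card) :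
    ∃ σ : Equiv.Perm α, s.map σ.toEmbedding = s' ∧ t.map σ.toEmbedding = t' := by
  let e : {x // x ∈ s ∪ t} ≃ {x // x ∈ s' ∪ t'} :=
    (Equiv.Finset.union s t h).symm.trans <|
      ((Finset.equivOfCardEq hs).sumCongr (Finset.equivOfCardEq ht)).trans
        (Equiv.Finset.union s' t' h')
  have hσ (x : α) (hx : x ∈ s ∪ t) : e.extendSubtype x = e ⟨x, hx⟩ :=
    e.extendSubtype_apply_of_mem x hx
  refine ⟨e.extendSubtype, Finset.eq_of_subset_of_card_le ?_ (by simp [hs]),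
    Finset.eq_of_subset_of_card_le ?_ (by simp [ht])⟩ <;>
  · simp only [Finset.subset_iff, Finset.mem_map, forall_exists_index, and_imp]
    rintro _ x hx rfl
    simp [hσ x (by simp [hx]), e, hx]

instance : MulAction.IsPretransitive (kneser n m ≃g kneser n m) (kneser n m).Dart where
  exists_smul_eq d d' := by
    obtain ⟨σ, hσ⟩ := exists_perm_map_eq (kneser_adj.1 d.adj).2 (kneser_adj.1 d'.adj).2
      (d.fst.2.trans d'.fst.2.symm) (d.snd.2.trans d'.snd.2.symm)
    exact ⟨kneserIso m σ, SimpleGraph.Dart.ext _ _ (Prod.ext (Subtype.ext hσ.1) (Subtype.ext hσ.2))⟩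

/-- The ground set of the Schrijver graph embeds as an initial segment. -/
def schrijverHom {N n : ℕ} (hN : N ≤ n) (m : ℕ) : schrijverGraph N m →g kneser n m where
  toFun s := ⟨s.1.1.map (Fin.castLEEmb hN), by rw [Finset.card_map, s.1.2]⟩
  map_rel' {s t} h := by
    simpa [schrijverGraph, kneser_adj, Subtype.ext_iff] using h

lemma kneser_isRegularOfDegree (hm : 0 < m) :
    (kneser n m).IsRegularOfDegree ((n - m).choose m) := by
  intro s
  rw [← SimpleGraph.card_neighborFinset_eq_degree]
  have : ((kneser n m).neighborFinset s).map (Function.Embedding.subtype _) =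
      Finset.powersetCard m s.1ᶜ := by
    ext t
    simp [kneser_adj_iff_disjoint hm, Finset.mem_powersetCard,
      Finset.subset_compl_iff_disjoint_left, and_comm]
  rw [← Finset.card_map, this, Finset.card_powersetCard, Finset.card_compl, s.2, Fintype.card_fin]

theorem card_dart_kneser_le_mul_card_monochromatic {k : ℕ} (hm : 0 < m) (hn : 2 * m + k ≤ n)
    (f : {s : Finset (Fin n) // s.card = m} → Fin k) :
    Fintype.card (kneser n m).Dart ≤
      (2 * m + k + 1) ^ (2 * (k + 1)) *
        (Finset.univ.filter fun d : (kneser n m).Dart => f d.fst = f d.snd).card := by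
  refine (card_dart_le_card_sq_mul_card_monochromatic (schrijverHom hn m)
    (schrijverGraph_not_colorable hm k) f).trans (Nat.mul_le_mul_right _ ?_)
  rw [Nat.mul_comm 2 (k + 1), pow_mul]
  exact Nat.pow_le_pow_left (card_stableSet_le m k) 2

end KneserSymmetry

section AddEdge

open Finset SimpleGraph

variable {V : Type*} {H : SimpleGraph V}

lemma le_length_of_toWalk_isSubwalk {H' : SimpleGraph V} {g : ℕ} {u v a : V} {w : H'.Walk a a}
    (hH' : ∀ e ∈ H'.edgeSet, e ≠ s(u, v) → e ∈ H.edgeSet)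
    (huv : ∀ p : H.Walk u v, g ≤ p.length + 1) (hw : w.IsTrail) (h : H'.Adj v u)
    (hsub : h.toWalk.IsSubwalk w) : g ≤ w.length := by
  obtain ⟨p, q, rfl⟩ := hsub
  have hnodup := hw.edges_nodup
  simp only [Walk.edges_append, Adj.toWalk, Walk.edges_cons, Walk.edges_nil] at hnodup
  have hqp : ∀ e ∈ (q.append p).edges, e ∈ H.edgeSet := fun e he =>
    hH' e (Walk.edges_subset_edgeSet _ he) (by
      rintro rfl
      simp only [Walk.edges_append, List.mem_append] at he
      grind [Sym2.eq_swap])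
  have := huv ((q.append p).transfer H hqp)
  simp only [Walk.length_transfer, Walk.length_append, Adj.toWalk, Walk.length_cons,
    Walk.length_nil] at this ⊢
  omega

lemma le_egirth_sup_edge {g : ℕ} {u v : V} (hH : (g : ℕ∞) ≤ H.egirth)
    (huv : ∀ p : H.Walk u v, g ≤ p.length + 1) : (g : ℕ∞) ≤ (H ⊔ edge u v).egirth := by
  have hold : ∀ e ∈ (H ⊔ edge u v).edgeSet, e ≠ s(u, v) → e ∈ H.edgeSet := by
    simp only [edgeSet_sup]
    exact fun e he hne => he.resolve_right fun h => hne (edgeSet_edge_subset h)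
  refine le_egirth.2 fun a w hw => ?_
  by_cases huw : s(u, v) ∈ w.edges
  · have hadj := Walk.adj_of_mem_edges w huw
    refine Nat.cast_le.2 ?_
    obtain hsub | hsub := (Walk.isSubwalk_toWalk_iff_mem_edges hadj).2 huw
    · refine le_length_of_toWalk_isSubwalk (by rwa [Sym2.eq_swap]) (fun p => ?_) hw.isTrail hadj
        hsub
      simpa using huv p.reverse
    · exact le_length_of_toWalk_isSubwalk hold huv hw.isTrail hadj.symm hsub
  · have hwH : ∀ e ∈ w.edges, e ∈ H.edgeSet := fun e he =>
      hold e (Walk.edges_subset_edgeSet _ he) (ne_of_mem_of_not_mem he huw)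
    simpa using le_egirth.1 hH a _ (hw.transfer hwH)

variable [Fintype V]

lemma card_edgeFinset_sup_edge_le (H : SimpleGraph V) (u v : V) :
    #(H ⊔ edge u v).edgeFinset ≤ #H.edgeFinset + 1 := by
  refine (card_le_card fun e he => ?_).trans (card_insert_le s(u, v) _)
  rw [mem_edgeFinset, edgeSet_sup] at he
  exact mem_insert.2 (he.symm.imp (fun h => edgeSet_edge_subset h) mem_edgeFinset.2)

lemma degree_sup_edge_le {Δ : ℕ} {u v : V} (hH : ∀ w, H.degree w ≤ Δ) (hu : H.degree u < Δ)
    (hv : H.degree v < Δ) (w : V) : (H ⊔ edge u v).degree w ≤ Δ := by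
  have key {x y : V} (hx : H.degree x < Δ) : #(insert y (H.neighborFinset x)) ≤ Δ :=
    (card_insert_le _ _).trans hx
  simp only [← card_neighborFinset_eq_degree] at *
  by_cases hwu : w = u
  · subst hwu
    refine (card_le_card fun x hx => ?_).trans (key (y := v) hu)
    simp only [mem_neighborFinset, sup_adj, edge_adj, mem_insert] at hx ⊢
    grind
  by_cases hwv : w = v
  · subst hwv
    refine (card_le_card fun x hx => ?_).trans (key (y := u) hv)
    simp only [mem_neighborFinset, sup_adj, edge_adj, mem_insert] at hx ⊢
    grind
  · refine (card_le_card fun x hx => ?_).trans (hH w)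
    simp only [mem_neighborFinset, sup_adj, edge_adj] at hx ⊢
    grind

lemma card_filter_exists_walk_length_le {Δ : ℕ} (hΔ : ∀ v, H.degree v ≤ Δ) (r : ℕ) (u : V) :
    #{v | ∃ p : H.Walk u v, p.length ≤ r} ≤ (Δ + 1) ^ r := by
  induction r generalizing u with
  | zero =>
    refine card_le_one.2 fun v hv w hw => ?_
    obtain ⟨⟨p, hp⟩, ⟨q, hq⟩⟩ := And.intro (mem_filter.1 hv).2 (mem_filter.1 hw).2
    exact (Walk.eq_of_length_eq_zero (Nat.le_zero.1 hp)).symm.trans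
      (Walk.eq_of_length_eq_zero (Nat.le_zero.1 hq))
  | succ r ih =>
    have hsub : ({v | ∃ p : H.Walk u v, p.length ≤ r + 1} : Finset V) ⊆
        (insert u (H.neighborFinset u)).biUnion fun x => {v | ∃ p : H.Walk x v, p.length ≤ r} := by
      intro v hv
      simp only [mem_filter_univ, mem_biUnion, mem_insert, mem_neighborFinset] at hv ⊢
      obtain ⟨_ | ⟨h, p⟩, hp⟩ := hv
      · exact ⟨u, .inl rfl, .nil, Nat.zero_le _⟩
      · exact ⟨_, .inr h, p, Nat.le_of_succ_le_succ hp⟩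
    rw [pow_succ']
    exact (card_le_card hsub).trans <| (card_biUnion_le_card_mul _ _ _ fun x _ => ih x).trans <|
      Nat.mul_le_mul_right _ <| (card_insert_le _ _).trans <| Nat.succ_le_succ <| hΔ u

lemma card_filter_le_degree_mul_le (H : SimpleGraph V) (Δ : ℕ) :
    #{v | Δ ≤ H.degree v} * Δ ≤ 2 * #H.edgeFinset := by
  rw [← sum_degrees_eq_twice_card_edges]
  exact (card_nsmul_le_sum _ _ _ fun v hv => (mem_filter.1 hv).2).trans
    (sum_le_sum_of_subset (filter_subset _ _))

end AddEdge

section GreedyColoring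

open Finset SimpleGraph

lemma exists_card_le_mul_card_filter {α β : Type*} {A : Finset α} {P : Finset β} {c : ℕ}
    {r : α → β → Prop} [DecidableRel r] (hA : A.Nonempty) (h : ∀ b ∈ P, #A ≤ c * #{a ∈ A | r a b}) :
    ∃ a ∈ A, #P ≤ c * #{b ∈ P | r a b} := by
  refine exists_le_of_sum_le hA ?_
  calc ∑ _a ∈ A, #P = ∑ _b ∈ P, #A := by simp [Nat.mul_comm]
    _ ≤ ∑ b ∈ P, c * #{a ∈ A | r a b} := sum_le_sum h
    _ = ∑ a ∈ A, c * #{b ∈ P | r a b} := by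
      rw [← mul_sum, ← mul_sum]
      exact congrArg _ (sum_card_bipartiteAbove_eq_sum_card_bipartiteBelow r).symm

variable {V : Type*} [Fintype V] {G H : SimpleGraph V} {D g Δ k q : ℕ}

lemma card_filter_dart_fst (hG : G.IsRegularOfDegree D) (P : V → Prop)
    [DecidablePred P] :
    #{d : G.Dart | P d.fst} = #{v | P v} * D := by
  rw [card_eq_sum_card_fiberwise (f := fun d : G.Dart => d.fst) (t := {v | P v})
    (fun d hd => by simpa using hd), sum_const_nat]
  intro v hv
  rw [filter_filter, ← hG v, ← dart_fst_fiber_card_eq_degree]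
  exact congrArg _ (filter_congr fun d _ => and_iff_right_of_imp fun h => h ▸ (mem_filter.1 hv).2)

lemma card_filter_dart_snd (hG : G.IsRegularOfDegree D) (P : V → Prop)
    [DecidablePred P] :
    #{d : G.Dart | P d.snd} = #{v | P v} * D := by
  rw [← card_filter_dart_fst hG P]
  exact card_equiv (Dart.symm_involutive (G := G)).toPerm fun d => by simp

lemma card_filter_dart_le (G : SimpleGraph V) {r : V → V → Prop} {b : ℕ}
    (h : ∀ u, #{v | r u v} ≤ b) : #{d : G.Dart | r d.fst d.snd} ≤ Fintype.card V * b := by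
  calc #{d : G.Dart | r d.fst d.snd}
      ≤ #(univ.sigma fun u : V => ({v | r u v} : Finset V)) :=
        card_le_card_of_injOn (fun d : G.Dart => ⟨d.fst, d.snd⟩) (fun d hd => by simpa using hd)
          fun d _ d' _ h => Dart.ext _ _ (by simpa [Prod.ext_iff] using h)
    _ ≤ Fintype.card V * b := by
        rw [card_sigma]
        exact sum_le_card_nsmul _ _ _ fun u _ => h u

/-- The proper colorings of `H` with `k` colors, as a set of plain functions to be counted. -/
noncomputable def properColorings (H : SimpleGraph V) (k : ℕ) : Finset (V → Fin k) :=
  {f | ∀ u v, H.Adj u v → f u ≠ f v}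

lemma mem_properColorings {f : V → Fin k} :
    f ∈ properColorings H k ↔ ∀ u v, H.Adj u v → f u ≠ f v := by
  simp [properColorings]

lemma properColorings_eq_empty_iff : properColorings H k = ∅ ↔ ¬ H.Colorable k := by
  simp only [eq_empty_iff_forall_notMem, mem_properColorings]
  exact ⟨fun h ⟨C⟩ => h C fun u v huv => C.valid huv, fun h f hf => h ⟨.mk f (hf _ _)⟩⟩

lemma card_properColorings_sup_edge_add_le {u v : V} (huv : u ≠ v) :
    #(properColorings (H ⊔ edge u v) k) + #{f ∈ properColorings H k | f u = f v} ≤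
      #(properColorings H k) := by
  rw [← card_union_of_disjoint]
  · refine card_le_card (union_subset (fun f hf => ?_) (filter_subset _ _))
    rw [mem_properColorings] at hf ⊢
    exact fun x y hxy => hf x y (.inl hxy)
  · refine disjoint_left.2 fun f hf hf' => ?_
    exact mem_properColorings.1 hf u v (.inr (by simp [edge_adj, huv])) (mem_filter.1 hf').2

/-- The darts of `G` that can be added to `H` without creating a vertex of degree more than `Δ`
or a cycle of length less than `g`. -/
noncomputable def addableDarts (G H : SimpleGraph V) (g Δ : ℕ) : Finset G.Dart :=
  {d | H.degree d.fst < Δ ∧ H.degree d.snd < Δ ∧ ∀ p : H.Walk d.fst d.snd, g < p.length}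

lemma card_compl_addableDarts_le (hG : G.IsRegularOfDegree D) (hΔ : ∀ v, H.degree v ≤ Δ) :
    #(addableDarts G H g Δ)ᶜ ≤
      2 * (#{v | Δ ≤ H.degree v} * D) + Fintype.card V * (Δ + 1) ^ g := by
  have hsub : (addableDarts G H g Δ)ᶜ ⊆
      univ.filter (fun d : G.Dart => Δ ≤ H.degree d.fst) ∪
        univ.filter (fun d : G.Dart => Δ ≤ H.degree d.snd) ∪
        univ.filter fun d : G.Dart => ∃ p : H.Walk d.fst d.snd, p.length ≤ g := by
    intro d hd
    simp only [addableDarts, mem_compl, mem_filter_univ, mem_union] at hd ⊢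
    grind
  calc #(addableDarts G H g Δ)ᶜ
      ≤ #{d : G.Dart | Δ ≤ H.degree d.fst} + #{d : G.Dart | Δ ≤ H.degree d.snd} +
          #{d : G.Dart | ∃ p : H.Walk d.fst d.snd, p.length ≤ g} :=
        (card_le_card hsub).trans <| (card_union_le _ _).trans <|
          Nat.add_le_add_right (card_union_le _ _) _
    _ ≤ 2 * (#{v | Δ ≤ H.degree v} * D) + Fintype.card V * (Δ + 1) ^ g := by
        rw [card_filter_dart_fst hG (Δ ≤ H.degree ·), card_filter_dart_snd hG (Δ ≤ H.degree ·),
          ← two_mul]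
        exact Nat.add_le_add_left
          (card_filter_dart_le G fun u => card_filter_exists_walk_length_le hΔ g u) _

/-- `H` is a possible outcome of adding at most `j` edges of `G` one after the other, each of them
ruling out at least a fraction `1 / c` of the remaining proper `k`-colorings. -/
structure IsGreedyStage (G : SimpleGraph V) (g Δ k c j : ℕ) (H : SimpleGraph V) : Prop where
  le : H ≤ G
  le_egirth : (g : ℕ∞) ≤ H.egirth
  degree_le (v : V) : H.degree v ≤ Δ
  card_edgeFinset_le : #H.edgeFinset ≤ j
  card_properColorings_le :
    (#(properColorings H k) : ℝ) ≤ k ^ Fintype.card V * (1 - 1 / c) ^ j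

namespace IsGreedyStage

variable {c j : ℕ}

lemma bot : IsGreedyStage G g Δ k c 0 ⊥ where
  le := bot_le
  le_egirth := by simp
  degree_le := by simp
  card_edgeFinset_le := by simp
  card_properColorings_le := by
    simpa using (Nat.cast_le (α := ℝ)).2 (card_le_univ (properColorings (⊥ : SimpleGraph V) k))

lemma exists_succ (hH : IsGreedyStage G g Δ k c j H) (hc : 0 < c)
    (hA : (addableDarts G H g Δ).Nonempty)
    (hmono : ∀ f : V → Fin k, #(addableDarts G H g Δ) ≤
      c * #{d ∈ addableDarts G H g Δ | f d.fst = f d.snd}) :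
    ∃ H', IsGreedyStage G g Δ k c (j + 1) H' := by
  obtain ⟨d, hd, hcard⟩ := exists_card_le_mul_card_filter (P := properColorings H k) (c := c)
    (r := fun d f => f d.fst = f d.snd) hA fun f _ => hmono f
  obtain ⟨hfst, hsnd, hwalk⟩ := (mem_filter.1 hd).2
  refine ⟨H ⊔ edge d.fst d.snd, sup_le hH.le ((edge_le_iff G).2 (.inr d.adj)),
    le_egirth_sup_edge hH.le_egirth fun p => (hwalk p).le.trans (Nat.le_succ _),
    fun v => ?_, Nat.le_trans ?_ (Nat.succ_le_succ hH.card_edgeFinset_le), ?_⟩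
  · convert degree_sup_edge_le hH.degree_le hfst hsnd v
  · convert card_edgeFinset_sup_edge_le H d.fst d.snd
  have hc' : (1 : ℝ) ≤ c := by exact_mod_cast hc
  have hcard' : (#(properColorings H k) : ℝ) / c ≤
      #{f ∈ properColorings H k | f d.fst = f d.snd} := by
    rw [div_le_iff₀' (by positivity)]
    exact_mod_cast hcard
  have hadd : (#(properColorings (H ⊔ edge d.fst d.snd) k) : ℝ) +
      #{f ∈ properColorings H k | f d.fst = f d.snd} ≤ #(properColorings H k) := by
    exact_mod_cast card_properColorings_sup_edge_add_le d.adj.ne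
  calc (#(properColorings (H ⊔ edge d.fst d.snd) k) : ℝ)
      ≤ #(properColorings H k) * (1 - 1 / c) := by rw [mul_one_sub, mul_one_div]; linarith
    _ ≤ k ^ Fintype.card V * (1 - 1 / c) ^ (j + 1) := by
        rw [pow_succ, ← mul_assoc]
        exact mul_le_mul_of_nonneg_right hH.card_properColorings_le
          (sub_nonneg.2 ((div_le_one (by positivity)).2 hc'))

/-- While `H` has at most `2 * q * k * |V|` edges, the degree bound `32 * q ^ 2 * k` is attained at
no more than a fraction `1 / (8 * q)` of the vertices. -/
lemma two_mul_card_compl_addableDarts_le (hH : IsGreedyStage G g (32 * q ^ 2 * k) k c j H)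
    (hG : G.IsRegularOfDegree D) (hq : 0 < q) (hk : 0 < k) (hj : j ≤ 2 * q * k * Fintype.card V)
    (hD : 4 * q * (32 * q ^ 2 * k + 1) ^ g ≤ D) :
    2 * q * #(addableDarts G H g (32 * q ^ 2 * k))ᶜ ≤ Fintype.card V * D := by
  have hfull : 8 * q * #{v | 32 * q ^ 2 * k ≤ H.degree v} ≤ Fintype.card V := by
    refine Nat.le_of_mul_le_mul_left ?_ (by positivity : 0 < 4 * q * k)
    calc 4 * q * k * (8 * q * #{v | 32 * q ^ 2 * k ≤ H.degree v})
        = #{v | 32 * q ^ 2 * k ≤ H.degree v} * (32 * q ^ 2 * k) := by ring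
      _ ≤ 2 * #H.edgeFinset := card_filter_le_degree_mul_le H _
      _ ≤ 2 * (2 * q * k * Fintype.card V) :=
          Nat.mul_le_mul_left _ (hH.card_edgeFinset_le.trans hj)
      _ = 4 * q * k * Fintype.card V := by ring
  have hcompl := Nat.mul_le_mul_left (4 * q) (card_compl_addableDarts_le (g := g) hG hH.degree_le)
  have hfullD := Nat.mul_le_mul_right D hfull
  have hball := Nat.mul_le_mul_left (Fintype.card V) hD
  linarith

lemma card_addableDarts_le (hH : IsGreedyStage G g (32 * q ^ 2 * k) k c j H)
    (hG : G.IsRegularOfDegree D) (hq : 0 < q) (hk : 0 < k) (hj : j ≤ 2 * q * k * Fintype.card V)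
    (hD : 4 * q * (32 * q ^ 2 * k + 1) ^ g ≤ D) {f : V → Fin k}
    (hmono : Fintype.card V * D ≤ q * #{d : G.Dart | f d.fst = f d.snd}) :
    Fintype.card V * D ≤
      2 * q * #{d ∈ addableDarts G H g (32 * q ^ 2 * k) | f d.fst = f d.snd} := by
  set A := addableDarts G H g (32 * q ^ 2 * k)
  have hsplit : #{d : G.Dart | f d.fst = f d.snd} ≤ #{d ∈ A | f d.fst = f d.snd} + #Aᶜ := by
    rw [← union_compl A, filter_union]
    exact (card_union_le _ _).trans (Nat.add_le_add_left (card_filter_le _ _) _)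
  have hcompl := hH.two_mul_card_compl_addableDarts_le hG hq hk hj hD
  have hsplit' := Nat.mul_le_mul_left (2 * q) hsplit
  linarith

end IsGreedyStage

lemma card_dart_eq (hG : G.IsRegularOfDegree D) : Fintype.card G.Dart = Fintype.card V * D := by
  simp [dart_card_eq_sum_degrees, hG.degree_eq]

lemma exists_isGreedyStage [Nonempty V] (hG : G.IsRegularOfDegree D) (hq : 0 < q) (hk : 0 < k)
    (hmono : ∀ f : V → Fin k, Fintype.card G.Dart ≤ q * #{d : G.Dart | f d.fst = f d.snd})
    (hD : 4 * q * (32 * q ^ 2 * k + 1) ^ g ≤ D) {j : ℕ} (hj : j ≤ 2 * q * k * Fintype.card V) :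
    ∃ H, IsGreedyStage G g (32 * q ^ 2 * k) k (2 * q) j H := by
  induction j with
  | zero => exact ⟨⊥, .bot⟩
  | succ j ih =>
    obtain ⟨H, hH⟩ := ih (Nat.le_of_succ_le hj)
    have hcount (f : V → Fin k) := hH.card_addableDarts_le hG hq hk (Nat.le_of_succ_le hj) hD
      ((card_dart_eq hG).symm.trans_le (hmono f))
    have hD0 : 0 < D := lt_of_lt_of_le (by positivity) hD
    refine hH.exists_succ (by positivity) ?_ fun f => ?_
    · have hpos := (Nat.mul_pos Fintype.card_pos hD0).trans_le (hcount fun _ => ⟨0, hk⟩)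
      exact (card_pos.1 (Nat.pos_of_mul_pos_left hpos)).mono (filter_subset _ _)
    · exact ((card_le_univ _).trans_eq (card_dart_eq hG)).trans (hcount f)

theorem exists_le_egirth_not_colorable [Nonempty V] (hG : G.IsRegularOfDegree D) (hq : 0 < q)
    (hk : 0 < k)
    (hmono : ∀ f : V → Fin k, Fintype.card G.Dart ≤ q * #{d : G.Dart | f d.fst = f d.snd})
    (hD : 4 * q * (32 * q ^ 2 * k + 1) ^ g ≤ D) :
    ∃ H ≤ G, (g : ℕ∞) ≤ H.egirth ∧ ¬ H.Colorable k := by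
  obtain ⟨H, hH⟩ := exists_isGreedyStage hG hq hk hmono hD le_rfl
  refine ⟨H, hH.le, hH.le_egirth, properColorings_eq_empty_iff.1 ?_⟩
  have hq' : (1 : ℝ) ≤ q := by exact_mod_cast hq
  have hbase : (0 : ℝ) ≤ 1 - 1 / (2 * q : ℕ) := by
    rw [sub_nonneg, div_le_one (by positivity)]
    push_cast
    linarith
  have hpow : (1 - 1 / (2 * q : ℕ) : ℝ) ^ (2 * q * k) ≤ Real.exp (-k) := by
    rw [pow_mul, ← mul_neg_one, Real.exp_nat_mul]
    exact pow_le_pow_left₀ (by positivity)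
      (Real.one_sub_div_pow_le_exp_neg (by push_cast; linarith)) k
  have hlt : (#(properColorings H k) : ℝ) < 1 := calc
    (#(properColorings H k) : ℝ)
      ≤ k ^ Fintype.card V * (1 - 1 / (2 * q : ℕ)) ^ (2 * q * k * Fintype.card V) :=
        hH.card_properColorings_le
    _ ≤ (k * Real.exp (-k)) ^ Fintype.card V := by
        rw [pow_mul _ (2 * q * k), ← mul_pow]
        gcongr
    _ < 1 := by
        refine pow_lt_one₀ (by positivity) ?_ Fintype.card_ne_zero
        rw [Real.exp_neg, ← div_eq_mul_inv, div_lt_one (Real.exp_pos _)]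
        linarith [Real.add_one_le_exp (k : ℝ)]
  exact card_eq_zero.1 (Nat.lt_one_iff.1 (by exact_mod_cast hlt))

end GreedyColoring

section DegreeGrowth

open Nat

lemma succ_mul_pow_le_factorial_mul_choose {m c e : ℕ} (hm : 0 < m) (he : e ≤ c) :
    (c + 1) * m ^ e ≤ (e + 1)! * (m + c).choose m := by
  induction c, he using Nat.le_induction with
  | base =>
    rw [factorial_succ, mul_assoc, choose_symm_add, ← ascFactorial_eq_factorial_mul_choose]
    exact Nat.mul_le_mul_left _
      ((Nat.pow_le_pow_left m.le_succ e).trans (pow_succ_le_ascFactorial (m + 1) e))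
  | succ c _ ih =>
    have hchoose : (c + 1) * (m + (c + 1)).choose m = (m + c + 1) * (m + c).choose m := by
      have := add_one_mul_choose_eq (m + c) c
      rw [choose_symm_add, choose_symm_add (b := c), ← add_assoc, this, mul_comm]
    refine Nat.le_of_mul_le_mul_left ?_ c.succ_pos
    calc (c + 1) * ((c + 1 + 1) * m ^ e)
        = (c + 2) * ((c + 1) * m ^ e) := by ring
      _ ≤ (m + c + 1) * ((e + 1)! * (m + c).choose m) := Nat.mul_le_mul (by omega) ih
      _ = (c + 1) * ((e + 1)! * (m + (c + 1)).choose m) := by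
          rw [mul_left_comm, ← hchoose, mul_left_comm]

lemma exists_forall_mul_pow_le_choose (B e : ℕ) :
    ∃ h, ∀ m c, 0 < m → h ≤ c → B * m ^ e ≤ (m + c).choose m := by
  refine ⟨e + (e + 1)! * B, fun m c hm hc => ?_⟩
  refine Nat.le_of_mul_le_mul_left ?_ (factorial_pos (e + 1))
  calc (e + 1)! * (B * m ^ e) = (e + 1)! * B * m ^ e := (mul_assoc _ _ _).symm
    _ ≤ (c + 1) * m ^ e := Nat.mul_le_mul_right _ (by omega)
    _ ≤ (e + 1)! * (m + c).choose m := succ_mul_pow_le_factorial_mul_choose hm (by omega)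

lemma exists_forall_greedy_bound_le_choose (k g : ℕ) :
    ∃ h, ∀ m c, 0 < m → h ≤ c →
      4 * (2 * m + k + 1) ^ (2 * (k + 1)) *
        (32 * ((2 * m + k + 1) ^ (2 * (k + 1))) ^ 2 * k + 1) ^ g ≤ (m + c).choose m := by
  obtain ⟨h, hh⟩ := exists_forall_mul_pow_le_choose
    (4 * (32 * k + 1) ^ g * (k + 3) ^ (2 * (k + 1) * (2 * g + 1))) (2 * (k + 1) * (2 * g + 1))
  refine ⟨h, fun m c hm hc => le_trans ?_ (hh m c hm hc)⟩
  have hbase : 2 * m + k + 1 ≤ (k + 3) * m := by nlinarith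
  set q := (2 * m + k + 1) ^ (2 * (k + 1)) with hq
  have hq0 : 0 < q := by positivity
  calc 4 * q * (32 * q ^ 2 * k + 1) ^ g
      ≤ 4 * q * ((32 * k + 1) * q ^ 2) ^ g := by gcongr; nlinarith
    _ = 4 * (32 * k + 1) ^ g * q ^ (2 * g + 1) := by
        rw [mul_pow, ← pow_mul, pow_succ q]
        ring
    _ = 4 * (32 * k + 1) ^ g * (2 * m + k + 1) ^ (2 * (k + 1) * (2 * g + 1)) := by
        rw [hq, ← pow_mul]
    _ ≤ 4 * (32 * k + 1) ^ g * ((k + 3) * m) ^ (2 * (k + 1) * (2 * g + 1)) := by gcongr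
    _ = _ := by rw [mul_pow, mul_assoc _ ((k + 3) ^ _)]

end DegreeGrowth

lemma exists_subgraph_le_chromaticNumber_le_girth {V : Type*} {G H : SimpleGraph V} {k g : ℕ}
    (hHG : H ≤ G) (hH : (g : ℕ∞) ≤ H.egirth) (hk : 2 ≤ k) (hcol : ¬ H.Colorable k) :
    ∃ H' : G.Subgraph, (k : ℕ∞) ≤ H'.coe.chromaticNumber ∧ (g : ℕ∞) ≤ H'.coe.girth := by
  let H' := SimpleGraph.toSubgraph H hHG
  let e : H ≃g H'.coe := H'.spanningCoeEquivCoeOfSpanning (SimpleGraph.toSubgraph.isSpanning H hHG)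
  have hcyclic : ¬ H.IsAcyclic := fun h => hcol (h.colorable_two.mono hk)
  refine ⟨H', ?_, ?_⟩
  · refine SimpleGraph.le_chromaticNumber_iff_colorable.2 fun n hn => ?_
    by_contra! hlt
    exact hcol ((hn.of_hom e.toHom).mono hlt.le)
  · have htop : H.egirth ≠ ⊤ := mt SimpleGraph.egirth_eq_top.1 hcyclic
    rwa [← e.girth_eq, SimpleGraph.girth, ENat.natCast_toNat htop]

theorem exists_le_kneser_le_egirth_not_colorable (k g : ℕ) (hk : 0 < k) :
    ∃ h, ∀ n m, 0 < m → 2 * m + h ≤ n →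
      ∃ H ≤ kneser n m, (g : ℕ∞) ≤ H.egirth ∧ ¬ H.Colorable k := by
  obtain ⟨h, hh⟩ := exists_forall_greedy_bound_le_choose k g
  refine ⟨h + k, fun n m hm hn => ?_⟩
  obtain ⟨s, -, hs⟩ := (Finset.univ : Finset (Fin n)).exists_subset_card_eq (n := m)
    (by rw [Finset.card_univ, Fintype.card_fin]; omega)
  have : Nonempty {s : Finset (Fin n) // s.card = m} := ⟨⟨s, hs⟩⟩
  refine exists_le_egirth_not_colorable (kneser_isRegularOfDegree hm)
    (q := (2 * m + k + 1) ^ (2 * (k + 1))) (by positivity) hk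
    (card_dart_kneser_le_mul_card_monochromatic hm (by omega)) ?_
  simpa [show n - m = m + (n - 2 * m) by omega] using hh m (n - 2 * m) hm (by omega)

/-- The Erdős–Hajnal conjecture holds for Kneser graphs: for all positive `k` and `g`
there is `h` such that every Kneser graph `KG(n,m)` (with `0 < m ≤ n/2`) whose
chromatic number `n - 2m + 2` is at least `h` contains a subgraph with chromatic
number at least `k` and girth at least `g`. -/
theorem erdos_hajnal_for_kneser (k g : ℕ) (hk : 0 < k) (hg : 0 < g) :
    ∃ h : ℕ, ∀ n m : ℕ, 0 < m → 2 * m ≤ n → h ≤ n - 2 * m + 2 →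
      ∃ H : (kneser n m).Subgraph,
        (k : ℕ∞) ≤ H.coe.chromaticNumber ∧ (g : ℕ∞) ≤ H.coe.girth := by
  -- Using `k + 2` instead of `k` colors rules out forests, whose `girth` is the junk value `0`.
  obtain ⟨h, hh⟩ := exists_le_kneser_le_egirth_not_colorable (k + 2) g (k + 1).succ_pos
  refine ⟨h + 2, fun n m hm hn hmn => ?_⟩
  obtain ⟨H, hHG, hgirth, hcol⟩ := hh n m hm (by omega)
  obtain ⟨H', hchrom, hgirth'⟩ :=
    exists_subgraph_le_chromaticNumber_le_girth hHG hgirth (Nat.le_add_left 2 k) hcol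
  exact ⟨H', le_trans (by exact_mod_cast Nat.le_add_right k 2) hchrom, hgirth'⟩
end
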